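/- arXiv:2108.12220 — 3 statements merged into one kernel-verified Lean document; each statement's English description precedes it below -/
import Mathlib

section
/- Let μ ∈ ℝ, set α := −iμ/2, and let u : ℝ → ℂ be a smooth solution of the PII equation u''(x) = x·u(x) + 2·u(x)³ − α on ℝ, taking purely imaginary values on ℝ and satisfying the asymptotic expansion (A−): there exist d ∈ iℝ, φ ∈ ℝ and x₀, K > 0 such that |u(x) − α/x − d·(−x)^{−1/4}·sin( (2/3)(−x)^{3/2} − (3/4)·d²·ln(−x) + φ )| ≤ K·(−x)^{−7/4} for all x ≤ −x₀. Define w(x) := ∫₀ˣ exp( (2/3^{1/3}) ∫₀^y u(z/3^{1/3}) dz ) dy − C with C := (2·3^{1/3}/(1−iμ))·(u'(0) − u(0)²), g(x) := e^{iμ·ln|x|}·w(x)/x for x ≠ 0, and let g₋ := lim_{x→−∞} g(x) (which exists). Then |g₋| = (1+μ²)^{−1/2}, and g(x) − g₋ = O((−x)^{−3/2}) as x → −∞. -/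
/-!
Write `c = 3^{1/3}`, `s = x/c`, `F(s) = exp (2 ∫₀ˢ u)` and `v = u' - u²`. The Painlevé equation gives
`(vF)' = F (s u - α)`, hence `((s - 2 v) F)' = (1 + 2α) F`, so that with the prescribed constant `C`
`w(c s) = c F(s) (s - 2 v(s)) / (1 + 2α)`. For `s < 0`, this turns `g(c s)` into a constant of modulus
`(1+μ²)^{-1/2}` times `G(s) = H(s) (1 - 2 v(s)/s)`, where `H(s) = exp (2 ∫₀ˢ u - 2α log (-s))` is
unimodular because `u` and `α` are purely imaginary.

The only asymptotic input needed is `u(s) = O((-s)^{-1/4})` (`u_bound`). One computes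
`G' = 2 (1 + 2α) H v / s²`. Integrating the term `H u' / s²` by parts, i.e. passing to
`P = G - 2 (1 + 2α) H u / s²`, leaves `P' = O((-s)^{-5/2})` (`hasDerivAt_P`), and integrating from `-∞`
gives the rate `O((-s)^{-3/2})` (`rate_of_deriv_bound`).

For the modulus of the limit, the mean value theorem provides a sequence `sₙ → -∞` along which `u'` is
bounded; there `v(sₙ)/sₙ → 0`, hence `|G(sₙ)| → 1`.
-/

/-- The real cube root of 3. -/
noncomputable def cbrt3 : ℝ := (3 : ℝ) ^ ((1:ℝ)/3)

open Filter Topology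

/-- `F(s) = exp (2 ∫₀ˢ u)`. -/
noncomputable def expInt (u : ℝ → ℂ) (s : ℝ) : ℂ := Complex.exp (2 * ∫ t in (0:ℝ)..s, u t)

/-- `H(s) = F(s) · (-s)^{-2α}`, meaningful for `s < 0`. -/
noncomputable def twist (α : ℂ) (u : ℝ → ℂ) (s : ℝ) : ℂ :=
  Complex.exp (2 * (∫ t in (0:ℝ)..s, u t) - 2 * α * (Real.log (-s) : ℂ))

/-- `G(s) = H(s) (1 - 2 (u'(s) - u(s)²) / s)`: the function `g` up to a constant factor and rescaling. -/
noncomputable def gScaled (α : ℂ) (u : ℝ → ℂ) (s : ℝ) : ℂ :=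
  twist α u s * (1 - 2 * (deriv u s - u s ^ 2) / s)

lemma hasDerivAt_int {u : ℝ → ℂ} (hu : Continuous u) (s : ℝ) :
    HasDerivAt (fun s => ∫ t in (0:ℝ)..s, u t) (u s) s :=
  intervalIntegral.integral_hasDerivAt_right (hu.intervalIntegrable _ _)
    (hu.stronglyMeasurableAtFilter _ _) hu.continuousAt

lemma hasDerivAt_expInt {u : ℝ → ℂ} (hu : Continuous u) (s : ℝ) :
    HasDerivAt (expInt u) (expInt u s * (2 * u s)) s :=
  ((hasDerivAt_int hu s).const_mul 2).cexp

lemma hasDerivAt_twist (α : ℂ) {u : ℝ → ℂ} (hu : Continuous u) {s : ℝ} (hs : s < 0) :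
    HasDerivAt (twist α u) (twist α u s * (2 * u s - 2 * α / s)) s := by
  have h1 : HasDerivAt (fun s : ℝ => Real.log (-s)) (s⁻¹) s := by
    simpa using Real.hasDerivAt_log hs.ne
  have h2 := ((hasDerivAt_int hu s).const_mul 2).sub (h1.ofReal_comp.const_mul (2 * α))
  have h3 := h2.cexp
  refine h3.congr_deriv ?_
  simp only [twist, Pi.sub_apply]
  push_cast
  rw [div_eq_mul_inv]

lemma norm_twist {α : ℂ} (hα : α.re = 0) {u : ℝ → ℂ} (hu : Continuous u)
    (him : ∀ x, (u x).re = 0) (s : ℝ) : ‖twist α u s‖ = 1 := by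
  have h1 : (∫ t in (0:ℝ)..s, u t).re = 0 := by
    have := intervalIntegral.intervalIntegral_re (𝕜 := ℂ) (μ := MeasureTheory.volume)
      (hu.intervalIntegrable 0 s)
    simp only [RCLike.re_to_complex, him, intervalIntegral.integral_zero] at this
    exact this.symm
  rw [twist, Complex.norm_exp]
  simp [h1, hα]

/-- The decay `u = O((-s)^{-1/4})` extracted from the asymptotic expansion; `d²` is real, so the sine
has a real argument and is bounded. -/
lemma u_bound {α : ℂ} {u : ℝ → ℂ}
    (hAm : ∃ d : ℂ, d.re = 0 ∧ ∃ φ : ℝ, ∃ x₀ : ℝ, 0 < x₀ ∧ ∃ K : ℝ, 0 < K ∧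
      ∀ x : ℝ, x ≤ -x₀ →
        ‖u x - α / x - d * (((-x) ^ (-(1:ℝ)/4) : ℝ) : ℂ) *
          Complex.sin (((2/3 * (-x) ^ ((3:ℝ)/2) : ℝ) : ℂ)
            - 3/4 * d ^ 2 * (Real.log (-x) : ℂ) + (φ : ℂ))‖
          ≤ K * (-x) ^ (-(7:ℝ)/4)) :
    ∃ s₀ : ℝ, 1 ≤ s₀ ∧ ∃ M : ℝ, 0 < M ∧ ∀ s : ℝ, s ≤ -s₀ → ‖u s‖ ≤ M * (-s) ^ (-(1:ℝ)/4) := by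
  obtain ⟨d, hd, φ, x₀, hx₀, K, hK, h⟩ := hAm
  refine ⟨max 1 x₀, le_max_left _ _, ‖α‖ + ‖d‖ + K, by positivity, fun s hs => ?_⟩
  have hs1 : 1 ≤ -s := by linarith [le_max_left 1 x₀]
  have hs2 : s ≤ -x₀ := by linarith [le_max_right 1 x₀]
  have hb := h s hs2
  have hsin : ‖Complex.sin (((2/3 * (-s) ^ ((3:ℝ)/2) : ℝ) : ℂ)
            - 3/4 * d ^ 2 * (Real.log (-s) : ℂ) + (φ : ℂ))‖ ≤ 1 := by
    have hd' : d = d.im * Complex.I := by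
      apply Complex.ext <;> simp [hd]
    have : (((2/3 * (-s) ^ ((3:ℝ)/2) : ℝ) : ℂ)
            - 3/4 * d ^ 2 * (Real.log (-s) : ℂ) + (φ : ℂ)) =
        ((2/3 * (-s) ^ ((3:ℝ)/2) + 3/4 * d.im ^ 2 * Real.log (-s) + φ : ℝ) : ℂ) := by
      rw [hd', mul_pow, Complex.I_sq]
      push_cast
      simp
    rw [this, ← Complex.ofReal_sin, Complex.norm_real]
    exact Real.abs_sin_le_one _
  have h7 : (-s) ^ (-(7:ℝ)/4) ≤ (-s) ^ (-(1:ℝ)/4) :=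
    Real.rpow_le_rpow_of_exponent_le hs1 (by norm_num)
  have h1 : (-s)⁻¹ ≤ (-s) ^ (-(1:ℝ)/4) := by
    rw [← Real.rpow_neg_one]
    exact Real.rpow_le_rpow_of_exponent_le hs1 (by norm_num)
  have hp : 0 ≤ (-s) ^ (-(1:ℝ)/4) := Real.rpow_nonneg (by linarith) _
  set A := (-s) ^ (-(1:ℝ)/4) with hA
  set S := Complex.sin (((2/3 * (-s) ^ ((3:ℝ)/2) : ℝ) : ℂ)
            - 3/4 * d ^ 2 * (Real.log (-s) : ℂ) + (φ : ℂ))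
  have e : u s = (u s - α / s - d * (A : ℂ) * S) + α / s + d * (A : ℂ) * S := by ring
  have n1 : ‖α / (s:ℂ)‖ ≤ ‖α‖ * A := by
    rw [norm_div, Complex.norm_real, Real.norm_eq_abs, abs_of_neg (by linarith), div_eq_mul_inv]
    gcongr
  have n2 : ‖d * (A : ℂ) * S‖ ≤ ‖d‖ * A := by
    rw [norm_mul, norm_mul, Complex.norm_real, Real.norm_eq_abs, abs_of_nonneg hp]
    exact mul_le_of_le_one_right (by positivity) hsin
  have n3 : K * (-s) ^ (-(7:ℝ)/4) ≤ K * A := by gcongr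
  have := norm_add₃_le (a := u s - α / s - d * (A : ℂ) * S) (b := α / s) (c := d * (A : ℂ) * S)
  rw [← e] at this
  linarith

section Painleve

variable {α : ℂ} {u : ℝ → ℂ}

lemma hasDerivAt_u (hu : ContDiff ℝ (⊤ : ℕ∞) u) (s : ℝ) : HasDerivAt u (deriv u s) s :=
  (hu.differentiable (by simp) s).hasDerivAt

/-- The derivative of `v = u' - u²`. -/
lemma hasDerivAt_v (hu : ContDiff ℝ (⊤ : ℕ∞) u)
    (hP : ∀ x : ℝ, deriv (deriv u) x = (x : ℂ) * u x + 2 * (u x) ^ 3 - α) (s : ℝ) :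
    HasDerivAt (fun s => deriv u s - u s ^ 2)
      (s * u s + 2 * u s ^ 3 - α - 2 * u s * deriv u s) s := by
  have h1 : ContDiff ℝ 1 (deriv u) := by
    have : ContDiff ℝ (1 + 1) u := hu.of_le (by norm_cast)
    exact (contDiff_succ_iff_deriv.1 this).2.2
  have h2 : HasDerivAt (deriv u) (deriv (deriv u) s) s :=
    (h1.differentiable (by simp) s).hasDerivAt
  rw [hP] at h2
  refine (h2.sub ((hasDerivAt_u hu s).pow 2)).congr_deriv ?_
  simp

/-- The explicit primitive of `F` coming from `((s - 2 v) F)' = (1 + 2α) F`. -/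
lemma integral_expInt (hu : ContDiff ℝ (⊤ : ℕ∞) u)
    (hP : ∀ x : ℝ, deriv (deriv u) x = (x : ℂ) * u x + 2 * (u x) ^ 3 - α) (s : ℝ) :
    (1 + 2 * α) * ∫ t in (0:ℝ)..s, expInt u t =
      (s - 2 * (deriv u s - u s ^ 2)) * expInt u s + 2 * (deriv u 0 - u 0 ^ 2) := by
  have hd : ∀ t : ℝ, HasDerivAt (fun t : ℝ => ((t:ℂ) - 2 * (deriv u t - u t ^ 2)) * expInt u t)
      ((1 + 2 * α) * expInt u t) t := fun t => by
    refine (((Complex.ofRealCLM.hasDerivAt (x := t)).sub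
      ((hasDerivAt_v hu hP t).const_mul 2)).mul (hasDerivAt_expInt hu.continuous t)).congr_deriv ?_
    simp only [Complex.ofRealCLM_apply, Complex.ofReal_one, Pi.sub_apply]
    ring
  have hc : Continuous (expInt u) :=
    continuous_iff_continuousAt.2 fun t => (hasDerivAt_expInt hu.continuous t).continuousAt
  rw [← intervalIntegral.integral_const_mul,
    intervalIntegral.integral_eq_sub_of_hasDerivAt (fun t _ => hd t)
      ((continuous_const.mul hc).intervalIntegrable _ _)]
  simp [expInt]

/-- After subtracting the boundary term `2 (1 + 2α) H u / s²`, the derivative of `G` no longer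
involves `u'`. -/
lemma hasDerivAt_P (hu : ContDiff ℝ (⊤ : ℕ∞) u)
    (hP : ∀ x : ℝ, deriv (deriv u) x = (x : ℂ) * u x + 2 * (u x) ^ 3 - α) {s : ℝ} (hs : s < 0) :
    HasDerivAt (fun s : ℝ => gScaled α u s - 2 * (1 + 2 * α) * (twist α u s * u s / (s:ℂ) ^ 2))
      (2 * (1 + 2 * α) * twist α u s *
        (-3 * u s ^ 2 / (s:ℂ) ^ 2 + (2 * α + 2) * u s / (s:ℂ) ^ 3)) s := by
  have hs' : (s:ℂ) ≠ 0 := by exact_mod_cast hs.ne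
  have hid : HasDerivAt (fun s : ℝ => (s:ℂ)) 1 s := (hasDerivAt_id s).ofReal_comp
  have hH := hasDerivAt_twist α hu.continuous hs
  have hG := hH.mul ((((hasDerivAt_v hu hP s).const_mul 2).div hid hs').const_sub 1)
  have hB := ((hH.mul (hasDerivAt_u hu s)).div (hid.pow 2) (pow_ne_zero 2 hs')).const_mul
    (2 * (1 + 2 * α))
  refine (hG.sub hB).congr_deriv ?_
  simp only [Pi.mul_apply, Pi.div_apply, Pi.pow_apply]
  field_simp
  ring

end Painleve

/-- A function with limit `L` at `-∞` and derivative `O((-s)^{-5/2})` approaches `L` at rate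
`(-s)^{-3/2}`. -/
lemma rate_of_deriv_bound {P P' : ℝ → ℂ} {L : ℂ} {s₀ M : ℝ} (hs₀ : 0 < s₀)
    (hd : ∀ s ≤ -s₀, HasDerivAt P (P' s) s) (hb : ∀ s ≤ -s₀, ‖P' s‖ ≤ M * (-s) ^ (-(5:ℝ)/2))
    (hL : Tendsto P atBot (𝓝 L)) (s : ℝ) (hs : s ≤ -s₀) :
    ‖P s - L‖ ≤ 2/3 * M * (-s) ^ (-(3:ℝ)/2) := by
  have hM : 0 ≤ M := by
    have h1 := (norm_nonneg _).trans (hb _ le_rfl)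
    have h2 : 0 < (- -s₀) ^ (-(5:ℝ)/2) := Real.rpow_pos_of_pos (by linarith) _
    exact nonneg_of_mul_nonneg_left h1 h2
  have hlim : Tendsto (fun a => ‖P s - P a‖) atBot (𝓝 ‖P s - L‖) := (hL.const_sub _).norm
  refine le_of_tendsto hlim ?_
  filter_upwards [eventually_le_atBot s] with a ha
  have hB : ∀ x ≤ -s₀, HasDerivAt
      (fun x : ℝ => 2/3 * M * ((-x) ^ (-(3:ℝ)/2) - (-a) ^ (-(3:ℝ)/2)))
      (M * (-x) ^ (-(5:ℝ)/2)) x := fun x hx => by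
    have h := (hasDerivAt_neg x).rpow_const (p := -(3:ℝ)/2) (Or.inl (by linarith))
    refine ((h.sub_const ((-a) ^ (-(3:ℝ)/2))).const_mul (2/3 * M)).congr_deriv ?_
    rw [show -(3:ℝ)/2 - 1 = -(5:ℝ)/2 by norm_num]
    ring
  have key := image_norm_le_of_norm_deriv_right_le_deriv_boundary'
    (f := fun x => P x - P a) (f' := P') (a := a) (b := s)
    (B := fun x : ℝ => 2/3 * M * ((-x) ^ (-(3:ℝ)/2) - (-a) ^ (-(3:ℝ)/2)))
    (B' := fun x => M * (-x) ^ (-(5:ℝ)/2))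
    (fun x hx => ((hd x (hx.2.trans hs)).continuousAt.sub continuousAt_const).continuousWithinAt)
    (fun x hx => ((hd x (hx.2.le.trans hs)).sub_const _).hasDerivWithinAt)
    (by simp)
    (fun x hx => (hB x (hx.2.trans hs)).continuousAt.continuousWithinAt)
    (fun x hx => (hB x (hx.2.le.trans hs)).hasDerivWithinAt)
    (fun x hx => hb x (hx.2.le.trans hs))
    (Set.right_mem_Icc.2 ha)
  refine key.trans ?_
  have : 0 ≤ (-a) ^ (-(3:ℝ)/2) := Real.rpow_nonneg (by linarith) _
  exact mul_le_mul_of_nonneg_left (by linarith) (by positivity)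

section Limit

variable {α : ℂ} {u : ℝ → ℂ} {s₀ M : ℝ}

lemma norm_boundary_le (hα : α.re = 0) (hu : Continuous u) (him : ∀ x, (u x).re = 0)
    (hs₀ : 1 ≤ s₀) (hM : 0 < M)
    (hb : ∀ s ≤ -s₀, ‖u s‖ ≤ M * (-s) ^ (-(1:ℝ)/4)) (s : ℝ) (hs : s ≤ -s₀) :
    ‖2 * (1 + 2 * α) * (twist α u s * u s / (s:ℂ) ^ 2)‖ ≤
      ‖2 * (1 + 2 * α)‖ * M * (-s) ^ (-(3:ℝ)/2) := by
  have ht : 0 < -s := by linarith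
  rw [norm_mul, norm_div, norm_mul (twist α u s), norm_twist hα hu him, one_mul, norm_pow, Complex.norm_real,
    Real.norm_eq_abs, abs_of_neg (by linarith), mul_assoc]
  refine mul_le_mul_of_nonneg_left ?_ (norm_nonneg _)
  calc ‖u s‖ / (-s) ^ 2 ≤ M * (-s) ^ (-(1:ℝ)/4) / (-s) ^ 2 := by gcongr; exact hb s hs
    _ = M * (-s) ^ (-(1:ℝ)/4 - (2:ℕ)) := by rw [Real.rpow_sub_natCast ht.ne', mul_div_assoc]
    _ ≤ M * (-s) ^ (-(3:ℝ)/2) :=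
      mul_le_mul_of_nonneg_left
        (Real.rpow_le_rpow_of_exponent_le (by linarith) (by norm_num)) hM.le

lemma norm_derivP_le (hα : α.re = 0) (hu : Continuous u) (him : ∀ x, (u x).re = 0)
    (hs₀ : 1 ≤ s₀) (hM : 0 < M)
    (hb : ∀ s ≤ -s₀, ‖u s‖ ≤ M * (-s) ^ (-(1:ℝ)/4)) (s : ℝ) (hs : s ≤ -s₀) :
    ‖2 * (1 + 2 * α) * twist α u s *
        (-3 * u s ^ 2 / (s:ℂ) ^ 2 + (2 * α + 2) * u s / (s:ℂ) ^ 3)‖ ≤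
      ‖2 * (1 + 2 * α)‖ * (3 * M ^ 2 + ‖2 * α + 2‖ * M) * (-s) ^ (-(5:ℝ)/2) := by
  have ht : 0 < -s := by linarith
  have hbs := hb s hs
  have ns : ‖(s:ℂ)‖ = -s := by
    rw [Complex.norm_real, Real.norm_eq_abs, abs_of_neg (by linarith)]
  have h1 : ‖-3 * u s ^ 2 / (s:ℂ) ^ 2‖ ≤ 3 * M ^ 2 * (-s) ^ (-(5:ℝ)/2) := by
    rw [norm_div, norm_mul, norm_pow, norm_pow, ns, norm_neg, Complex.norm_ofNat]
    calc 3 * ‖u s‖ ^ 2 / (-s) ^ 2 ≤ 3 * (M * (-s) ^ (-(1:ℝ)/4)) ^ 2 / (-s) ^ 2 := by gcongr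
      _ = 3 * M ^ 2 * ((-s) ^ (-(1:ℝ)/4 * (2:ℕ)) / (-s) ^ 2) := by
        rw [Real.rpow_mul_natCast ht.le]; ring
      _ = 3 * M ^ 2 * (-s) ^ (-(5:ℝ)/2) := by
        rw [← Real.rpow_sub_natCast ht.ne']; norm_num
  have h2 : ‖(2 * α + 2) * u s / (s:ℂ) ^ 3‖ ≤ ‖2 * α + 2‖ * M * (-s) ^ (-(5:ℝ)/2) := by
    rw [norm_div, norm_mul, norm_pow, ns]
    calc ‖2 * α + 2‖ * ‖u s‖ / (-s) ^ 3
        ≤ ‖2 * α + 2‖ * (M * (-s) ^ (-(1:ℝ)/4)) / (-s) ^ 3 := by gcongr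
      _ = ‖2 * α + 2‖ * M * (-s) ^ (-(1:ℝ)/4 - (3:ℕ)) := by
        rw [Real.rpow_sub_natCast ht.ne']; ring
      _ ≤ ‖2 * α + 2‖ * M * (-s) ^ (-(5:ℝ)/2) :=
        mul_le_mul_of_nonneg_left
          (Real.rpow_le_rpow_of_exponent_le (by linarith) (by norm_num)) (by positivity)
  rw [norm_mul, norm_mul (2 * (1 + 2 * α)), norm_twist hα hu him, mul_one, mul_assoc]
  refine mul_le_mul_of_nonneg_left ?_ (norm_nonneg _)
  exact (norm_add_le _ _).trans (by linarith)

lemma gScaled_rate (hα : α.re = 0) (hu : ContDiff ℝ (⊤ : ℕ∞) u)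
    (hP : ∀ x : ℝ, deriv (deriv u) x = (x : ℂ) * u x + 2 * (u x) ^ 3 - α)
    (him : ∀ x, (u x).re = 0) (hs₀ : 1 ≤ s₀) (hM : 0 < M)
    (hb : ∀ s ≤ -s₀, ‖u s‖ ≤ M * (-s) ^ (-(1:ℝ)/4)) {L : ℂ}
    (hL : Tendsto (gScaled α u) atBot (𝓝 L)) :
    ∃ K : ℝ, 0 ≤ K ∧ ∀ s ≤ -s₀, ‖gScaled α u s - L‖ ≤ K * (-s) ^ (-(3:ℝ)/2) := by
  have hbd := norm_boundary_le hα hu.continuous him hs₀ hM hb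
  have hz : Tendsto (fun s : ℝ => 2 * (1 + 2 * α) * (twist α u s * u s / (s:ℂ) ^ 2)) atBot
      (𝓝 0) := by
    refine squeeze_zero_norm' (a := fun s => ‖2 * (1 + 2 * α)‖ * M * (-s) ^ (-(3:ℝ)/2)) ?_ ?_
    · filter_upwards [eventually_le_atBot (-s₀)] with s hs using hbd s hs
    · have := ((tendsto_rpow_neg_atTop (y := 3/2) (by norm_num)).comp
        tendsto_neg_atBot_atTop).const_mul (‖2 * (1 + 2 * α)‖ * M)
      simpa [Function.comp_def, neg_div] using this
  have hPL := hL.sub hz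
  rw [sub_zero] at hPL
  have hr := rate_of_deriv_bound (by linarith : 0 < s₀)
    (fun s hs => hasDerivAt_P hu hP (by linarith : s < 0))
    (norm_derivP_le hα hu.continuous him hs₀ hM hb) hPL
  refine ⟨2/3 * (‖2 * (1 + 2 * α)‖ * (3 * M ^ 2 + ‖2 * α + 2‖ * M)) + ‖2 * (1 + 2 * α)‖ * M,
    by positivity, fun s hs => ?_⟩
  have h1 := hr s hs
  have h2 := hbd s hs
  set B := 2 * (1 + 2 * α) * (twist α u s * u s / (s:ℂ) ^ 2)
  have e : gScaled α u s - L = (gScaled α u s - B - L) + B := by ring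
  rw [e, add_mul]
  exact (norm_add_le _ _).trans (add_le_add h1 h2)

/-- There are points arbitrarily far to the left where `u'` is bounded: the mean value theorem on
unit intervals, applied to the (real) imaginary part of `u`. -/
lemma exists_deriv_bound (hu : ContDiff ℝ (⊤ : ℕ∞) u) (him : ∀ x, (u x).re = 0)
    (hub : ∀ s ≤ -s₀, ‖u s‖ ≤ M) (a : ℝ) (ha : a ≤ -s₀) :
    ∃ s < a, ‖deriv u s‖ ≤ 2 * M := by
  have hd : ∀ s, HasDerivAt (fun t => (u t).im) (deriv u s).im s := fun s =>
    Complex.imCLM.hasFDerivAt.comp_hasDerivAt s (hasDerivAt_u hu s)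
  have hre : ∀ s, (deriv u s).re = 0 := fun s => by
    have h : HasDerivAt (fun t => (u t).re) (deriv u s).re s :=
      Complex.reCLM.hasFDerivAt.comp_hasDerivAt s (hasDerivAt_u hu s)
    simp only [him] at h
    exact h.unique (hasDerivAt_const s 0)
  obtain ⟨s, hs, hsd⟩ := exists_hasDerivAt_eq_slope (fun t => (u t).im) (fun s => (deriv u s).im)
    (by linarith : a - 1 < a) (fun s _ => (hd s).continuousAt.continuousWithinAt)
    (fun s _ => hd s)
  refine ⟨s, hs.2, ?_⟩
  have e : deriv u s = (deriv u s).im * Complex.I := by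
    apply Complex.ext <;> simp [hre]
  rw [e, hsd, norm_mul, Complex.norm_I, mul_one, Complex.norm_real, Real.norm_eq_abs]
  have h1 := (Complex.abs_im_le_norm (u a)).trans (hub a ha)
  have h2 := (Complex.abs_im_le_norm (u (a - 1))).trans (hub _ (by linarith))
  rw [show a - (a - 1) = 1 by ring, div_one]
  exact (abs_sub _ _).trans (by linarith)

lemma norm_limit_gScaled (hα : α.re = 0) (hu : ContDiff ℝ (⊤ : ℕ∞) u)
    (him : ∀ x, (u x).re = 0) (hub : ∀ s ≤ -s₀, ‖u s‖ ≤ M) {L : ℂ}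
    (hL : Tendsto (gScaled α u) atBot (𝓝 L)) : ‖L‖ = 1 := by
  have hex : ∀ n : ℕ, ∃ s : ℝ, s < min (-s₀) (-(n:ℝ)) ∧ ‖deriv u s‖ ≤ 2 * M := fun n =>
    exists_deriv_bound hu him hub _ (min_le_left _ _)
  choose σ hσ hσd using hex
  have hσt : Tendsto σ atTop atBot :=
    tendsto_atBot_mono (fun n => ((hσ n).trans_le (min_le_right _ _)).le)
      (tendsto_neg_atTop_atBot.comp tendsto_natCast_atTop_atTop)
  have hinv : Tendsto (fun n => (2 * (2 * M + M ^ 2)) * |(σ n)⁻¹|) atTop (𝓝 0) := by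
    simpa using ((tendsto_inv_atBot_zero.comp hσt).abs).const_mul (2 * (2 * M + M ^ 2))
  have hz : Tendsto (fun n => 2 * (deriv u (σ n) - u (σ n) ^ 2) / (σ n : ℂ)) atTop (𝓝 0) := by
    refine squeeze_zero_norm (fun n => ?_) hinv
    have hn := hub (σ n) ((hσ n).trans_le (min_le_left _ _)).le
    rw [div_eq_mul_inv, norm_mul, norm_mul, norm_inv, Complex.norm_real, Real.norm_eq_abs,
      abs_inv, Complex.norm_ofNat]
    gcongr
    refine (norm_sub_le _ _).trans (add_le_add (hσd n) ?_)
    rw [norm_pow]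
    gcongr
  have h1 := (hz.const_sub 1).norm
  have h2 := (hL.comp hσt).norm
  have e : (fun n => ‖(gScaled α u ∘ σ) n‖) =
      fun n => ‖1 - 2 * (deriv u (σ n) - u (σ n) ^ 2) / (σ n : ℂ)‖ := by
    funext n
    simp only [Function.comp, gScaled]
    rw [norm_mul, norm_twist hα hu.continuous him, one_mul]
  rw [e] at h2
  simpa using tendsto_nhds_unique h2 h1

end Limit

lemma cbrt3_pos : 0 < cbrt3 := Real.rpow_pos_of_pos (by norm_num) _

/-- The substitution `x = c s` in the double integral defining `w`. -/
lemma integral_rescale (u : ℝ → ℂ) {c : ℝ} (hc : c ≠ 0) (s : ℝ) :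
    (∫ y in (0:ℝ)..(c * s), Complex.exp (((2 / c : ℝ) : ℂ) * ∫ z in (0:ℝ)..y, u (z / c))) =
      c * ∫ t in (0:ℝ)..s, expInt u t := by
  have hc' : (c:ℂ) ≠ 0 := by exact_mod_cast hc
  have h : ∀ y : ℝ, Complex.exp (((2 / c : ℝ) : ℂ) * ∫ z in (0:ℝ)..y, u (z / c)) =
      expInt u (y / c) := fun y => by
    rw [intervalIntegral.integral_comp_div _ hc, zero_div, expInt, Complex.real_smul]
    congr 1
    push_cast
    field_simp
  simp only [h]
  rw [intervalIntegral.integral_comp_div _ hc, zero_div, mul_div_cancel_left₀ _ hc,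
    Complex.real_smul]

/-- With `g₋ = lim_{x→-∞} g(x)`, one has `|g₋| = (1+μ²)^{-1/2}` and
`g(x) - g₋ = O((-x)^{-3/2})` as `x → -∞`. -/
theorem stmt_13 (μ : ℝ) (α : ℂ) (hα : α = -Complex.I * μ / 2)
    (u : ℝ → ℂ) (hu : ContDiff ℝ (⊤ : ℕ∞) u)
    (hP : ∀ x : ℝ, deriv (deriv u) x = (x : ℂ) * u x + 2 * (u x) ^ 3 - α)
    (him : ∀ x : ℝ, (u x).re = 0)
    (hAm : ∃ d : ℂ, d.re = 0 ∧ ∃ φ : ℝ, ∃ x₀ : ℝ, 0 < x₀ ∧ ∃ K : ℝ, 0 < K ∧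
      ∀ x : ℝ, x ≤ -x₀ →
        ‖u x - α / x - d * (((-x) ^ (-(1:ℝ)/4) : ℝ) : ℂ) *
          Complex.sin (((2/3 * (-x) ^ ((3:ℝ)/2) : ℝ) : ℂ)
            - 3/4 * d ^ 2 * (Real.log (-x) : ℂ) + (φ : ℂ))‖
          ≤ K * (-x) ^ (-(7:ℝ)/4))
    (Cc : ℂ)
    (hC : Cc = (2 * cbrt3 / (1 - Complex.I * μ)) * (deriv u 0 - (u 0) ^ 2))
    (w : ℝ → ℂ)
    (hw : ∀ x : ℝ, w x =
      (∫ y in (0:ℝ)..x, Complex.exp (((2 / cbrt3 : ℝ) : ℂ) *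
        ∫ z in (0:ℝ)..y, u (z / cbrt3))) - Cc)
    (g : ℝ → ℂ)
    (hg : ∀ x : ℝ, x ≠ 0 →
      g x = Complex.exp (Complex.I * μ * Real.log |x|) * w x / x)
    (gm : ℂ) (hgm : Filter.Tendsto g Filter.atBot (nhds gm)) :
    ‖gm‖ = (1 + μ ^ 2) ^ (-(1:ℝ)/2) ∧
    ∃ x₁ : ℝ, 0 < x₁ ∧ ∃ K' : ℝ, 0 < K' ∧ ∀ x : ℝ, x ≤ -x₁ →
      ‖g x - gm‖ ≤ K' * (-x) ^ (-(3:ℝ)/2) := by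
  have hc := cbrt3_pos
  have hc' : (cbrt3 : ℂ) ≠ 0 := by exact_mod_cast hc.ne'
  have hαre : α.re = 0 := by rw [hα]; simp
  have hμα : 1 - Complex.I * μ = 1 + 2 * α := by rw [hα]; ring
  have hne : 1 + 2 * α ≠ 0 := fun h => by
    have := congrArg Complex.re h
    simp [hαre] at this
  obtain ⟨s₀, hs₀, M, hM, hb⟩ := u_bound hAm
  have hub : ∀ s ≤ -s₀, ‖u s‖ ≤ M := fun s hs => (hb s hs).trans <|
    mul_le_of_le_one_right hM.le (Real.rpow_le_one_of_one_le_of_nonpos (by linarith) (by norm_num))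
  -- the unimodular factor produced by `log |c s| = log c + log (-s)`
  set κ : ℂ := Complex.exp (Complex.I * μ * Real.log cbrt3) with hκ
  have hκn : ‖κ‖ = 1 := by
    rw [hκ, Complex.norm_exp]
    simp
  have hgs : ∀ s : ℝ, s < 0 → gScaled α u s = (1 + 2 * α) / κ * g (cbrt3 * s) := by
    intro s hs
    have hs' : (s:ℂ) ≠ 0 := by exact_mod_cast hs.ne
    have hκ0 : κ ≠ 0 := Complex.exp_ne_zero _
    have hlog : Real.log |cbrt3 * s| = Real.log cbrt3 + Real.log (-s) := by
      rw [abs_mul, abs_of_pos hc, abs_of_neg hs, Real.log_mul hc.ne' (by linarith)]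
    have hI := integral_expInt hu hP s
    have hww : w (cbrt3 * s) =
        cbrt3 / (1 + 2 * α) * ((s - 2 * (deriv u s - u s ^ 2)) * expInt u s) := by
      have : (∫ t in (0:ℝ)..s, expInt u t) =
          ((s - 2 * (deriv u s - u s ^ 2)) * expInt u s + 2 * (deriv u 0 - u 0 ^ 2)) /
            (1 + 2 * α) := by
        rw [← hI]; field_simp
      rw [hw, integral_rescale u hc.ne', this, hC, hμα]
      field_simp
      ring
    have hexp : Complex.exp (Complex.I * μ * (Real.log |cbrt3 * s| : ℝ)) * expInt u s =
        κ * twist α u s := by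
      rw [hlog, hκ, expInt, twist, ← Complex.exp_add, ← Complex.exp_add, hα]
      congr 1
      push_cast
      ring
    rw [hg _ (mul_ne_zero hc.ne' hs.ne), hww, gScaled]
    have e2 : twist α u s =
        Complex.exp (Complex.I * μ * (Real.log |cbrt3 * s| : ℝ)) * expInt u s / κ := by
      rw [hexp]; field_simp
    rw [e2]
    push_cast
    field_simp
  have hscale : Tendsto (fun s : ℝ => cbrt3 * s) atBot atBot :=
    tendsto_id.const_mul_atBot hc
  have hL : Tendsto (gScaled α u) atBot (𝓝 ((1 + 2 * α) / κ * gm)) := by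
    refine ((hgm.comp hscale).const_mul ((1 + 2 * α) / κ)).congr' ?_
    filter_upwards [eventually_lt_atBot 0] with s hs using (hgs s hs).symm
  have hnα : ‖1 + 2 * α‖ = (1 + μ ^ 2) ^ ((1:ℝ)/2) := by
    rw [← hμα, ← Real.sqrt_eq_rpow, Complex.norm_def, Complex.normSq_apply]
    simp [sq]
  have hnpos : 0 < ‖1 + 2 * α‖ := norm_pos_iff.2 hne
  refine ⟨?_, ?_⟩
  · have h1 := norm_limit_gScaled hαre hu him hub hL
    rw [norm_mul, norm_div, hκn, div_one] at h1
    rw [neg_div, Real.rpow_neg (by positivity), ← hnα]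
    field_simp
    linarith
  · obtain ⟨K, hK, hr⟩ := gScaled_rate hαre hu hP him hs₀ hM hb hL
    have hcp : 0 < cbrt3⁻¹ ^ (-(3:ℝ)/2) := Real.rpow_pos_of_pos (inv_pos.2 hc) _
    refine ⟨cbrt3 * s₀, by positivity, ‖1 + 2 * α‖⁻¹ * ((K + 1) * cbrt3⁻¹ ^ (-(3:ℝ)/2)),
      by positivity, fun x hx => ?_⟩
    obtain ⟨s, rfl⟩ : ∃ s, x = cbrt3 * s := ⟨x / cbrt3, by field_simp⟩
    have hs : s ≤ -s₀ := by
      have : cbrt3 * s ≤ cbrt3 * (-s₀) := by linarith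
      exact le_of_mul_le_mul_left this hc
    have h1 := hr s hs
    rw [hgs s (by linarith), ← mul_sub, norm_mul, norm_div, hκn, div_one] at h1
    have hsx : (-s) ^ (-(3:ℝ)/2) =
        cbrt3⁻¹ ^ (-(3:ℝ)/2) * (-(cbrt3 * s)) ^ (-(3:ℝ)/2) := by
      rw [← Real.mul_rpow (inv_pos.2 hc).le (by nlinarith)]
      congr 1
      field_simp
    have hp : 0 ≤ (-s) ^ (-(3:ℝ)/2) := Real.rpow_nonneg (by linarith) _
    rw [mul_assoc, mul_assoc, ← hsx, ← div_eq_inv_mul, le_div_iff₀ hnpos]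
    linarith
end

section
/- Let μ ∈ ℝ, set α := −iμ/2, and let u : ℝ → ℂ be a smooth solution of the PII equation u''(x) = x·u(x) + 2·u(x)³ − α on ℝ, taking purely imaginary values on ℝ and satisfying both asymptotic expansions: (A+) there exist x₀, K > 0 such that |u(x) − α/x − 2α(1−α²)·x^{−4} − 4α(1−α²)(10−3α²)·x^{−7}| ≤ K·x^{−10} for all x ≥ x₀, and (A−) there exist d ∈ iℝ, φ ∈ ℝ and x₁, K' > 0 such that |u(x) − α/x − d·(−x)^{−1/4}·sin( (2/3)(−x)^{3/2} − (3/4)·d²·ln(−x) + φ )| ≤ K'·(−x)^{−7/4} for all x ≤ −x₁. Define w(x) := ∫₀ˣ exp( (2/3^{1/3}) ∫₀^y u(z/3^{1/3}) dz ) dy − C with C := (2·3^{1/3}/(1−iμ))·(u'(0) − u(0)²), and g(x) := e^{iμ·ln|x|}·w(x)/x for x ≠ 0. Then the limits g₊ := lim_{x→+∞} g(x) and g₋ := lim_{x→−∞} g(x) exist and are nonzero, the limit lim_{x→+∞} exp( 2·∫_{−x}^{x} u(y) dy ) exists, and g₊/g₋ = lim_{x→+∞} exp( 2·∫_{−x}^{x}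 u(y) dy ). -/
open Filter Topology Set MeasureTheory

/-- A function whose derivative is `O(x^{-7/4})` has a limit at `+∞`. -/
lemma exists_lim_of_deriv_bound (f f' : ℝ → ℂ) (a K : ℝ) (ha : 0 < a)
    (hf : ∀ x, a ≤ x → HasDerivAt f (f' x) x)
    (hb : ∀ x, a ≤ x → ‖f' x‖ ≤ K * x ^ (-(7:ℝ)/4)) :
    ∃ L, Tendsto f atTop (𝓝 L) := by
  have hint : IntegrableOn f' (Ioi a) := by
    have h1 : IntegrableOn (fun x : ℝ => K * x ^ (-(7:ℝ)/4)) (Ioi a) :=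
      (integrableOn_Ioi_rpow_of_lt (by norm_num) ha).const_mul K
    refine Integrable.mono' h1 ?_ ?_
    · refine ((stronglyMeasurable_deriv f).aestronglyMeasurable).congr ?_
      filter_upwards [ae_restrict_mem measurableSet_Ioi] with x hx
      exact (hf x (le_of_lt hx)).deriv
    · filter_upwards [ae_restrict_mem measurableSet_Ioi] with x hx
      exact hb x (le_of_lt hx)
  exact ⟨_, tendsto_limUnder_of_hasDerivAt_of_integrableOn_Ioi
    (fun x hx => hf x (le_of_lt hx)) hint⟩

/-- Landau-type estimate: the derivative is controlled by the function and by its second derivative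
on an interval of unit length. -/
lemma norm_deriv_le_of_unit_interval (u : ℝ → ℂ) (hu : ContDiff ℝ (⊤ : ℕ∞) u) (x ε M : ℝ)
    (h0 : ∀ s ∈ Icc x (x + 1), ‖u s‖ ≤ ε)
    (h2 : ∀ s ∈ Icc x (x + 1), ‖deriv (deriv u) s‖ ≤ M) :
    ‖deriv u x‖ ≤ 2 * ε + M := by
  have hd : Differentiable ℝ u := hu.differentiable (by simp)
  have hu' : ContDiff ℝ (⊤ : ℕ∞) (deriv u) := by
    have := (contDiff_infty_iff_deriv (𝕜 := ℝ) (f := u)).1 hu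
    exact this.2
  have hd' : Differentiable ℝ (deriv u) := hu'.differentiable (by simp)
  have hM : 0 ≤ M := (norm_nonneg _).trans (h2 x ⟨le_refl _, by linarith⟩)
  have h1 : ∀ s ∈ Icc x (x + 1), ‖deriv u s - deriv u x‖ ≤ M := by
    intro s hs
    have := norm_image_sub_le_of_norm_deriv_le_segment' (f := deriv u) (f' := deriv (deriv u))
      (C := M) (a := x) (b := x + 1) (fun y _ => (hd' y).hasDerivAt.hasDerivWithinAt)
      (fun y hy => h2 y (Ico_subset_Icc_self hy)) s hs
    have h3 : M * (s - x) ≤ M * 1 := by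
      apply mul_le_mul_of_nonneg_left _ hM
      linarith [hs.2]
    linarith
  have h3 := norm_image_sub_le_of_norm_deriv_le_segment' (f := fun s : ℝ => u s - s • deriv u x)
      (f' := fun s => deriv u s - (1:ℝ) • deriv u x)
      (C := M) (a := x) (b := x + 1)
      (fun y _ => ((hd y).hasDerivAt.sub
        ((hasDerivAt_id y).smul_const (deriv u x))).hasDerivWithinAt)
      (fun y hy => by simpa using h1 y (Ico_subset_Icc_self hy)) (x + 1) ⟨by linarith, le_refl _⟩
  have e : deriv u x = u (x + 1) - u x
      - ((u (x + 1) - (x + 1) • deriv u x) - (u x - x • deriv u x)) := by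
    simp only [Complex.real_smul]; push_cast; ring
  have ha := h0 x ⟨le_refl _, by linarith⟩
  have hb := h0 (x + 1) ⟨by linarith, le_refl _⟩
  have h4 : ‖deriv u x‖ ≤ ‖u (x + 1)‖ + ‖u x‖
      + ‖(u (x + 1) - (x + 1) • deriv u x) - (u x - x • deriv u x)‖ := by
    conv_lhs => rw [e]
    exact (norm_sub_le _ _).trans (add_le_add_left (norm_sub_le _ _) _)
  simp only [add_sub_cancel_left, mul_one] at h3
  linarith

/-- For a solution of PII vanishing at an end of the real line, `u' - u² = o(x)` at that end. -/
lemma tendsto_riccati_div (α : ℂ) (u : ℝ → ℂ) (hu : ContDiff ℝ (⊤ : ℕ∞) u)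
    (hP : ∀ x : ℝ, deriv (deriv u) x = (x : ℂ) * u x + 2 * (u x) ^ 3 - α)
    (l : Filter ℝ) (hl : Tendsto (fun x : ℝ => |x|) l atTop)
    (h0 : ∀ ε > 0, ∀ᶠ x in l, ∀ s ∈ Icc x (x + 1), ‖u s‖ ≤ ε) :
    Tendsto (fun x : ℝ => (deriv u x - u x ^ 2) / (x : ℂ)) l (𝓝 0) := by
  rw [NormedAddGroup.tendsto_nhds_zero]
  intro ε' hε'
  obtain ⟨ε, hε, hε1, hεε⟩ : ∃ ε : ℝ, 0 < ε ∧ ε ≤ 1 ∧ 3 * ε ≤ ε' :=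
    ⟨min 1 (ε' / 3), by positivity, min_le_left _ _, by
      have := min_le_right 1 (ε' / 3)
      linarith⟩
  filter_upwards [h0 ε hε, hl.eventually (eventually_gt_atTop ((6 * ε + ‖α‖) / ε)),
    hl.eventually (eventually_gt_atTop 0)] with x hx hx1 hx0
  have h2 : ∀ s ∈ Icc x (x + 1), ‖deriv (deriv u) s‖ ≤ (|x| + 1) * ε + 2 * ε + ‖α‖ := by
    intro s hs
    have hus := hx s hs
    have hs' : |s| ≤ |x| + 1 := by
      have : |s - x| ≤ 1 := by rw [abs_le]; constructor <;> linarith [hs.1, hs.2]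
      have := abs_add_le (s - x) x
      simp only [sub_add_cancel] at this
      linarith
    rw [hP]
    have n1 : ‖(s : ℂ) * u s‖ ≤ (|x| + 1) * ε := by
      rw [norm_mul, Complex.norm_real, Real.norm_eq_abs]
      exact mul_le_mul hs' hus (norm_nonneg _) (by positivity)
    have n2 : ‖2 * (u s) ^ 3‖ ≤ 2 * ε := by
      rw [norm_mul, norm_pow]
      have : ‖u s‖ ^ 3 ≤ ε ^ 3 := pow_le_pow_left₀ (norm_nonneg _) hus 3
      have : ε ^ 3 ≤ ε := by
        have := pow_le_of_le_one hε.le hε1 (n := 3) (by norm_num)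
        linarith
      simp only [Complex.norm_ofNat]
      linarith
    calc _ ≤ ‖(s : ℂ) * u s + 2 * (u s) ^ 3‖ + ‖α‖ := norm_sub_le _ _
      _ ≤ ‖(s : ℂ) * u s‖ + ‖2 * (u s) ^ 3‖ + ‖α‖ := by gcongr; exact norm_add_le _ _
      _ ≤ _ := by linarith
  have h3 := norm_deriv_le_of_unit_interval u hu x ε _ hx h2
  have h4 : ‖u x ^ 2‖ ≤ ε := by
    rw [norm_pow]
    have := hx x ⟨le_refl _, by linarith⟩
    have h5 : ‖u x‖ ^ 2 ≤ ε ^ 2 := pow_le_pow_left₀ (norm_nonneg _) this 2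
    have := pow_le_of_le_one hε.le hε1 (n := 2) (by norm_num)
    linarith
  rw [norm_div, Complex.norm_real, Real.norm_eq_abs, div_lt_iff₀ hx0]
  have h5 := norm_sub_le (deriv u x) (u x ^ 2)
  rw [div_lt_iff₀ hε] at hx1
  nlinarith

/-- The PII equation makes `exp (2 ∫ u)` the derivative of an explicit expression. -/
lemma integral_exp_eq (α : ℂ) (u : ℝ → ℂ) (hu : ContDiff ℝ (⊤ : ℕ∞) u)
    (hP : ∀ x : ℝ, deriv (deriv u) x = (x : ℂ) * u x + 2 * (u x) ^ 3 - α) (t : ℝ) :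
    (1 + 2 * α) * ∫ s in (0:ℝ)..t, Complex.exp (2 * ∫ z in (0:ℝ)..s, u z) =
      ((t : ℂ) - 2 * (deriv u t - u t ^ 2)) * Complex.exp (2 * ∫ z in (0:ℝ)..t, u z)
        + 2 * (deriv u 0 - u 0 ^ 2) := by
  have hd : Differentiable ℝ u := hu.differentiable (by simp)
  have hu' : ContDiff ℝ (⊤ : ℕ∞) (deriv u) :=
    ((contDiff_infty_iff_deriv (𝕜 := ℝ) (f := u)).1 hu).2
  have hd' : Differentiable ℝ (deriv u) := hu'.differentiable (by simp)
  have hU : ∀ s : ℝ, HasDerivAt (fun s : ℝ => ∫ z in (0:ℝ)..s, u z) (u s) s := fun s =>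
    intervalIntegral.integral_hasDerivAt_right (hu.continuous.intervalIntegrable _ _)
      hu.continuous.aestronglyMeasurable.stronglyMeasurableAtFilter hu.continuous.continuousAt
  have hE : ∀ s : ℝ, HasDerivAt (fun s : ℝ => Complex.exp (2 * ∫ z in (0:ℝ)..s, u z))
      (Complex.exp (2 * ∫ z in (0:ℝ)..s, u z) * (2 * u s)) s := fun s =>
    ((hU s).const_mul 2).cexp
  have hF : ∀ s : ℝ, HasDerivAt (fun s : ℝ => ((s : ℂ) - 2 * (deriv u s - u s ^ 2)) *
      Complex.exp (2 * ∫ z in (0:ℝ)..s, u z))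
      ((1 + 2 * α) * Complex.exp (2 * ∫ z in (0:ℝ)..s, u z)) s := by
    intro s
    have h1 : HasDerivAt (fun s : ℝ => (s : ℂ)) 1 s := Complex.ofRealCLM.hasDerivAt
    have h2 := (h1.sub (((hd' s).hasDerivAt.sub ((hd s).hasDerivAt.pow 2)).const_mul 2)).mul (hE s)
    refine h2.congr_deriv ?_
    simp only [Pi.sub_apply, Pi.pow_apply, hP s]
    push_cast
    ring
  have hc : Continuous (fun s : ℝ => (1 + 2 * α) * Complex.exp (2 * ∫ z in (0:ℝ)..s, u z)) :=
    continuous_const.mul (continuous_iff_continuousAt.2 fun s => (hE s).continuousAt)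
  rw [← intervalIntegral.integral_const_mul,
    intervalIntegral.integral_eq_sub_of_hasDerivAt (fun s _ => hF s) (hc.intervalIntegrable _ _)]
  simp

/-- Leading asymptotics of the antiderivative at `+∞`, together with `u → 0`. -/
lemma exists_lim_atTop (α β γ : ℂ) (u : ℝ → ℂ) (hu : ContDiff ℝ (⊤ : ℕ∞) u)
    (hAp : ∃ x₀ : ℝ, 0 < x₀ ∧ ∃ K : ℝ, 0 < K ∧ ∀ x : ℝ, x₀ ≤ x →
      ‖u x - α / x - β * (x : ℂ) ^ (-4 : ℤ) - γ * (x : ℂ) ^ (-7 : ℤ)‖ ≤ K * x ^ (-10 : ℤ)) :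
    (∃ L, Tendsto (fun x : ℝ => (∫ z in (0:ℝ)..x, u z) - α * Real.log x) atTop (𝓝 L)) ∧
      Tendsto u atTop (𝓝 0) := by
  obtain ⟨x₀, hx₀, K, hK, h⟩ := hAp
  have hb : ∀ x, max x₀ 1 ≤ x → ‖u x - α / x‖ ≤ (K + ‖β‖ + ‖γ‖) * x ^ (-(7:ℝ)/4) := by
    intro x hx
    have hx1 : 1 ≤ x := (le_max_right _ _).trans hx
    have hx0 : 0 < x := by linarith
    have hz : ∀ n : ℤ, (n : ℝ) ≤ -(7:ℝ)/4 → x ^ n ≤ x ^ (-(7:ℝ)/4) := by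
      intro n hn
      rw [← Real.rpow_intCast]
      exact Real.rpow_le_rpow_of_exponent_le hx1 hn
    have h1 := h x ((le_max_left _ _).trans hx)
    have e : u x - α / x = (u x - α / x - β * (x : ℂ) ^ (-4 : ℤ) - γ * (x : ℂ) ^ (-7 : ℤ))
      + β * (x : ℂ) ^ (-4 : ℤ) + γ * (x : ℂ) ^ (-7 : ℤ) := by ring
    have nb : ∀ (δ : ℂ) (n : ℤ), ‖δ * (x : ℂ) ^ n‖ = ‖δ‖ * x ^ n := by
      intro δ n
      rw [norm_mul, norm_zpow, Complex.norm_real, Real.norm_of_nonneg hx0.le]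
    rw [e]
    refine (norm_add₃_le).trans ?_
    rw [nb, nb]
    have a1 := mul_le_mul_of_nonneg_left (hz (-10) (by norm_num)) hK.le
    have a2 := mul_le_mul_of_nonneg_left (hz (-4) (by norm_num)) (norm_nonneg β)
    have a3 := mul_le_mul_of_nonneg_left (hz (-7) (by norm_num)) (norm_nonneg γ)
    linarith
  constructor
  · refine exists_lim_of_deriv_bound _ (fun x => u x - α / x) (max x₀ 1) _ (by positivity)
      (fun x hx => ?_) hb
    have hx0 : 0 < x := lt_of_lt_of_le (by positivity) hx
    have h1 : HasDerivAt (fun s : ℝ => ∫ z in (0:ℝ)..s, u z) (u x) x :=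
      intervalIntegral.integral_hasDerivAt_right (hu.continuous.intervalIntegrable _ _)
      hu.continuous.aestronglyMeasurable.stronglyMeasurableAtFilter hu.continuous.continuousAt
    have h2 := ((Real.hasDerivAt_log hx0.ne').ofReal_comp).const_mul α
    refine (h1.sub h2).congr_deriv ?_
    push_cast
    rw [div_eq_mul_inv]
  · have t1 : Tendsto (fun x : ℝ => (K + ‖β‖ + ‖γ‖) * x ^ (-(7:ℝ)/4)) atTop (𝓝 0) := by
      have := (tendsto_rpow_neg_atTop (y := 7/4) (by norm_num)).const_mul (K + ‖β‖ + ‖γ‖)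
      simpa [neg_div] using this
    have t2 : Tendsto (fun x : ℝ => u x - α / x) atTop (𝓝 0) :=
      squeeze_zero_norm' (by filter_upwards [eventually_ge_atTop (max x₀ 1)] using hb) t1
    have t3 : Tendsto (fun x : ℝ => α / (x : ℂ)) atTop (𝓝 0) := by
      have := (Complex.continuous_ofReal.tendsto 0).comp tendsto_inv_atTop_zero
      simpa [Function.comp_def, div_eq_mul_inv] using this.const_mul α
    simpa using t2.add t3

/-- Leading asymptotics of the antiderivative at `-∞`, together with `u → 0`. With `θ` the phase,
the oscillating term is removed by adding a multiple of `y^{-3/4} cos θ(y)`, whose derivative equals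
`-y^{-1/4} sin θ(y) + O(y^{-7/4})`. -/
lemma exists_lim_atBot (α : ℂ) (u : ℝ → ℂ) (hu : ContDiff ℝ (⊤ : ℕ∞) u)
    (hAm : ∃ d : ℂ, d.re = 0 ∧ ∃ φ : ℝ, ∃ x₁ : ℝ, 0 < x₁ ∧ ∃ K' : ℝ, 0 < K' ∧
      ∀ x : ℝ, x ≤ -x₁ →
        ‖u x - α / x - d * (((-x) ^ (-(1:ℝ)/4) : ℝ) : ℂ) *
          Complex.sin (((2/3 * (-x) ^ ((3:ℝ)/2) : ℝ) : ℂ)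
            - 3/4 * d ^ 2 * (Real.log (-x) : ℂ) + (φ : ℂ))‖
          ≤ K' * (-x) ^ (-(7:ℝ)/4)) :
    (∃ L, Tendsto (fun x : ℝ => (∫ z in (0:ℝ)..(-x), u z) - α * Real.log x) atTop (𝓝 L)) ∧
      Tendsto (fun x => u (-x)) atTop (𝓝 0) := by
  obtain ⟨d, hd, φ, x₁, hx₁, K, hK, h⟩ := hAm
  obtain ⟨k, hk⟩ : ∃ k : ℝ, (k : ℂ) = - (3/4 * d ^ 2) := by
    refine ⟨3/4 * d.im ^ 2, ?_⟩
    have : d = d.im * Complex.I := by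
      apply Complex.ext <;> simp [hd]
    rw [this]
    simp [mul_pow]
  set θ : ℝ → ℝ := fun y => 2/3 * y ^ ((3:ℝ)/2) + k * Real.log y + φ with hθ
  have h' : ∀ y, x₁ ≤ y → ‖u (-y) + α / y - d * ((y ^ (-(1:ℝ)/4) : ℝ) : ℂ) * (Real.sin (θ y) : ℝ)‖
      ≤ K * y ^ (-(7:ℝ)/4) := by
    intro y hy
    have h1 := h (-y) (by linarith)
    rw [neg_neg] at h1
    convert h1 using 2
    have : (Real.sin (θ y) : ℂ) = Complex.sin (((2/3 * y ^ ((3:ℝ)/2) : ℝ) : ℂ)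
            - 3/4 * d ^ 2 * (Real.log y : ℂ) + (φ : ℂ)) := by
      rw [Complex.ofReal_sin, hθ]
      congr 1
      push_cast
      rw [hk]
      ring
    rw [this]
    push_cast
    rw [div_neg, sub_neg_eq_add]
  have hH : ∀ y : ℝ, 0 < y → HasDerivAt (fun y => y ^ (-(3:ℝ)/4) * Real.cos (θ y))
      (-(y ^ (-(1:ℝ)/4) * Real.sin (θ y))
        - y ^ (-(7:ℝ)/4) * (3/4 * Real.cos (θ y) + k * Real.sin (θ y))) y := by
    intro y hy
    have a1 := Real.hasDerivAt_rpow_const (x := y) (p := -(3:ℝ)/4) (Or.inl hy.ne')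
    have a2 := (((Real.hasDerivAt_rpow_const (x := y) (p := (3:ℝ)/2) (Or.inl hy.ne')).const_mul
      (2/3)).add ((Real.hasDerivAt_log hy.ne').const_mul k)).add_const φ
    have a3 : HasDerivAt (fun y => Real.cos (θ y)) _ y := HasDerivAt.cos a2
    refine (a1.mul a3).congr_deriv ?_
    have e1 : y ^ (-(3:ℝ)/4 - 1) = y ^ (-(7:ℝ)/4) := by norm_num
    have e2 : y ^ (-(1:ℝ)/4) = y ^ (-(3:ℝ)/4) * y ^ ((3:ℝ)/2 - 1) := by
      rw [← Real.rpow_add hy]; norm_num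
    have e3 : y ^ (-(7:ℝ)/4) = y ^ (-(3:ℝ)/4) * y⁻¹ := by
      rw [← Real.rpow_neg_one, ← Real.rpow_add hy]; norm_num
    have e4 : (2/3 * y ^ ((3:ℝ)/2) + k * Real.log y + φ) = θ y := rfl
    rw [e1, e2, e3]
    ring
  have hHlim : Tendsto (fun y => y ^ (-(3:ℝ)/4) * Real.cos (θ y)) atTop (𝓝 0) := by
    have t1 : Tendsto (fun y : ℝ => y ^ (-(3:ℝ)/4)) atTop (𝓝 0) := by
      simpa [neg_div] using tendsto_rpow_neg_atTop (y := 3/4) (by norm_num)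
    refine squeeze_zero_norm' ?_ t1
    filter_upwards [eventually_gt_atTop 0] with y hy
    rw [norm_mul, Real.norm_eq_abs, Real.norm_eq_abs, abs_of_pos (Real.rpow_pos_of_pos hy _)]
    exact mul_le_of_le_one_right (by positivity) (Real.abs_cos_le_one _)
  constructor
  · have hex : ∃ L, Tendsto (fun y : ℝ => (∫ z in (0:ℝ)..(-y), u z) - α * Real.log y
        - d * ((y ^ (-(3:ℝ)/4) * Real.cos (θ y) : ℝ) : ℂ)) atTop (𝓝 L) := by
      refine exists_lim_of_deriv_bound _
        (fun y => -(u (-y) + α / y - d * ((y ^ (-(1:ℝ)/4) : ℝ) : ℂ) * (Real.sin (θ y) : ℝ))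
          + d * ((y ^ (-(7:ℝ)/4) * (3/4 * Real.cos (θ y) + k * Real.sin (θ y)) : ℝ) : ℂ))
        x₁ (K + ‖d‖ * (3/4 + |k|)) hx₁ ?_ ?_
      · intro y hy
        have hy0 : 0 < y := by linarith
        have b1 : HasDerivAt (fun s : ℝ => ∫ z in (0:ℝ)..s, u z) (u (-y)) (-y) :=
          intervalIntegral.integral_hasDerivAt_right (hu.continuous.intervalIntegrable _ _)
          hu.continuous.aestronglyMeasurable.stronglyMeasurableAtFilter hu.continuous.continuousAt
        have b1' := HasDerivAt.scomp y b1 (hasDerivAt_neg y)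
        have b2 := ((Real.hasDerivAt_log hy0.ne').ofReal_comp).const_mul α
        have b3 := ((hH y hy0).ofReal_comp).const_mul d
        refine ((b1'.sub b2).sub b3).congr_deriv ?_
        simp only [neg_smul, one_smul]
        push_cast
        ring
      · intro y hy
        have hy0 : 0 < y := by linarith
        refine (norm_add_le _ _).trans ?_
        rw [norm_neg, add_mul]
        refine add_le_add (h' y hy) ?_
        rw [norm_mul, Complex.norm_real, norm_mul, Real.norm_eq_abs, Real.norm_eq_abs,
          abs_of_pos (Real.rpow_pos_of_pos hy0 _), mul_assoc]
        refine mul_le_mul_of_nonneg_left ?_ (norm_nonneg _)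
        rw [mul_comm]
        refine mul_le_mul_of_nonneg_right ?_ (by positivity)
        refine (abs_add_le _ _).trans ?_
        rw [abs_mul, abs_mul, abs_of_pos (by norm_num : (0:ℝ) < 3/4)]
        have := Real.abs_cos_le_one (θ y)
        have := mul_le_of_le_one_right (abs_nonneg k) (Real.abs_sin_le_one (θ y))
        linarith
    obtain ⟨L, hL⟩ := hex
    refine ⟨L, ?_⟩
    have t := ((Complex.continuous_ofReal.tendsto 0).comp hHlim).const_mul d
    have := hL.add t
    simpa [Function.comp_def] using this
  · have t1 : Tendsto (fun x : ℝ => K * x ^ (-(7:ℝ)/4)) atTop (𝓝 0) := by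
      have := (tendsto_rpow_neg_atTop (y := 7/4) (by norm_num)).const_mul K
      simpa [neg_div] using this
    have t2 := squeeze_zero_norm' (by filter_upwards [eventually_ge_atTop x₁] using h') t1
    have t3 : Tendsto (fun x : ℝ => α / (x : ℂ)) atTop (𝓝 0) := by
      have := (Complex.continuous_ofReal.tendsto 0).comp tendsto_inv_atTop_zero
      simpa [Function.comp_def, div_eq_mul_inv] using this.const_mul α
    have t4 : Tendsto (fun y : ℝ => ‖d‖ * y ^ (-(1:ℝ)/4)) atTop (𝓝 0) := by
      have := (tendsto_rpow_neg_atTop (y := 1/4) (by norm_num)).const_mul ‖d‖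
      simpa [neg_div] using this
    have t5 : Tendsto (fun y : ℝ => d * ((y ^ (-(1:ℝ)/4) : ℝ) : ℂ) * (Real.sin (θ y) : ℝ))
        atTop (𝓝 0) := by
      refine squeeze_zero_norm' ?_ t4
      filter_upwards [eventually_gt_atTop 0] with y hy
      rw [norm_mul, norm_mul, Complex.norm_real, Complex.norm_real, Real.norm_eq_abs,
        Real.norm_eq_abs, abs_of_pos (Real.rpow_pos_of_pos hy _)]
      exact mul_le_of_le_one_right (by positivity) (Real.abs_sin_le_one _)
    have t6 := (t2.sub t3).add t5
    simp only [sub_zero, add_zero] at t6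
    refine t6.congr fun x => ?_
    ring

/-- The limits `g₊ = lim_{x→+∞} g(x)` and `g₋ = lim_{x→-∞} g(x)` exist, are nonzero,
the limit `lim_{x→+∞} exp(2 ∫_{-x}^x u)` exists, and `g₊/g₋` equals that limit. -/
theorem stmt_18 (μ : ℝ) (α : ℂ) (hα : α = -Complex.I * μ / 2)
    (u : ℝ → ℂ) (hu : ContDiff ℝ (⊤ : ℕ∞) u)
    (hP : ∀ x : ℝ, deriv (deriv u) x = (x : ℂ) * u x + 2 * (u x) ^ 3 - α)
    (him : ∀ x : ℝ, (u x).re = 0)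
    (hAp : ∃ x₀ : ℝ, 0 < x₀ ∧ ∃ K : ℝ, 0 < K ∧ ∀ x : ℝ, x₀ ≤ x →
      ‖u x - α / x - 2 * α * (1 - α ^ 2) * (x : ℂ) ^ (-4 : ℤ)
        - 4 * α * (1 - α ^ 2) * (10 - 3 * α ^ 2) * (x : ℂ) ^ (-7 : ℤ)‖
        ≤ K * x ^ (-10 : ℤ))
    (hAm : ∃ d : ℂ, d.re = 0 ∧ ∃ φ : ℝ, ∃ x₁ : ℝ, 0 < x₁ ∧ ∃ K' : ℝ, 0 < K' ∧
      ∀ x : ℝ, x ≤ -x₁ →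
        ‖u x - α / x - d * (((-x) ^ (-(1:ℝ)/4) : ℝ) : ℂ) *
          Complex.sin (((2/3 * (-x) ^ ((3:ℝ)/2) : ℝ) : ℂ)
            - 3/4 * d ^ 2 * (Real.log (-x) : ℂ) + (φ : ℂ))‖
          ≤ K' * (-x) ^ (-(7:ℝ)/4))
    (Cc : ℂ)
    (hC : Cc = (2 * cbrt3 / (1 - Complex.I * μ)) * (deriv u 0 - (u 0) ^ 2))
    (w : ℝ → ℂ)
    (hw : ∀ x : ℝ, w x =
      (∫ y in (0:ℝ)..x, Complex.exp (((2 / cbrt3 : ℝ) : ℂ) *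
        ∫ z in (0:ℝ)..y, u (z / cbrt3))) - Cc)
    (g : ℝ → ℂ)
    (hg : ∀ x : ℝ, x ≠ 0 →
      g x = Complex.exp (Complex.I * μ * Real.log |x|) * w x / x) :
    ∃ gp gm : ℂ, gp ≠ 0 ∧ gm ≠ 0 ∧
      Filter.Tendsto g Filter.atTop (nhds gp) ∧
      Filter.Tendsto g Filter.atBot (nhds gm) ∧
      ∃ L : ℂ,
        Filter.Tendsto (fun x : ℝ => Complex.exp (2 * ∫ y in (-x)..x, u y))
          Filter.atTop (nhds L) ∧
        gp / gm = L := by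
  have hc : 0 < cbrt3 := Real.rpow_pos_of_pos (by norm_num) _
  have hcC : (cbrt3 : ℂ) ≠ 0 := by exact_mod_cast hc.ne'
  have h2α : 2 * α = -(Complex.I * μ) := by rw [hα]; ring
  have hne : 1 - Complex.I * μ ≠ 0 := by
    intro h0
    have := congrArg Complex.re h0
    simp at this
  obtain ⟨⟨Lp, hLp⟩, hup⟩ := exists_lim_atTop α _ _ u hu hAp
  obtain ⟨⟨Lm, hLm⟩, hum⟩ := exists_lim_atBot α u hu hAm
  set E : ℝ → ℂ := fun t => Complex.exp (2 * ∫ z in (0:ℝ)..t, u z) with hE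
  -- The inner integral in `w` is `∫ u` up to the dilation by `cbrt3`.
  have hin : ∀ y : ℝ, ((2 / cbrt3 : ℝ) : ℂ) * ∫ z in (0:ℝ)..y, u (z / cbrt3)
      = 2 * ∫ z in (0:ℝ)..(y / cbrt3), u z := by
    intro y
    rw [intervalIntegral.integral_comp_div u hc.ne', zero_div, Complex.real_smul]
    push_cast
    field_simp
  have hwE : ∀ t : ℝ, w (cbrt3 * t) = cbrt3 / (1 - Complex.I * μ) *
      (((t : ℂ) - 2 * (deriv u t - u t ^ 2)) * E t) := by
    intro t
    have h1 := integral_exp_eq α u hu hP t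
    rw [h2α, ← sub_eq_add_neg] at h1
    rw [hw, hC]
    simp only [hin]
    rw [intervalIntegral.integral_comp_div (fun s => Complex.exp (2 * ∫ z in (0:ℝ)..s, u z)) hc.ne',
      zero_div, mul_div_cancel_left₀ _ hc.ne', Complex.real_smul]
    field_simp
    linear_combination h1
  -- `g` in the dilated variable, as a product of three factors with known limits.
  have hgE : ∀ t : ℝ, t ≠ 0 → g (cbrt3 * t) =
      Complex.exp (Complex.I * μ * Real.log cbrt3) / (1 - Complex.I * μ) *
      (1 - 2 * ((deriv u t - u t ^ 2) / (t : ℂ))) *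
      Complex.exp (2 * ((∫ z in (0:ℝ)..t, u z) - α * Real.log |t|)) := by
    intro t ht
    have htC : (t : ℂ) ≠ 0 := by exact_mod_cast ht
    rw [hg _ (mul_ne_zero hc.ne' ht), hwE, abs_mul, abs_of_pos hc,
      Real.log_mul hc.ne' (abs_pos.2 ht).ne']
    have e1 : Complex.exp (2 * ((∫ z in (0:ℝ)..t, u z) - α * Real.log |t|))
        = E t * Complex.exp (Complex.I * μ * Real.log |t|) := by
      rw [hE, ← Complex.exp_add]
      congr 1
      linear_combination (-(Real.log |t| : ℂ)) * h2α
    rw [e1]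
    push_cast
    rw [mul_add, Complex.exp_add]
    field_simp
  have hrp := tendsto_riccati_div α u hu hP Filter.atTop Filter.tendsto_abs_atTop_atTop (by
    intro ε hε
    have := (NormedAddGroup.tendsto_nhds_zero.1 hup) ε hε
    obtain ⟨a, ha⟩ := Filter.eventually_atTop.1 this
    filter_upwards [Filter.eventually_ge_atTop a] with x hx s hs
    exact (ha s (hx.trans hs.1)).le)
  have hrm := tendsto_riccati_div α u hu hP Filter.atBot Filter.tendsto_abs_atBot_atTop (by
    intro ε hε
    have := (NormedAddGroup.tendsto_nhds_zero.1 hum) ε hε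
    obtain ⟨a, ha⟩ := Filter.eventually_atTop.1 this
    filter_upwards [Filter.eventually_le_atBot (-a - 1)] with x hx s hs
    have := ha (-s) (by linarith [hs.2])
    rw [neg_neg] at this
    exact this.le)
  set A : ℂ := Complex.exp (Complex.I * μ * Real.log cbrt3) / (1 - Complex.I * μ) with hA
  have hA0 : A ≠ 0 := div_ne_zero (Complex.exp_ne_zero _) hne
  have hEp : Filter.Tendsto
      (fun t : ℝ => Complex.exp (2 * ((∫ z in (0:ℝ)..t, u z) - α * Real.log |t|)))
      Filter.atTop (nhds (Complex.exp (2 * Lp))) := by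
    refine ((Complex.continuous_exp.tendsto _).comp (hLp.const_mul 2)).congr' ?_
    filter_upwards [Filter.eventually_gt_atTop 0] with t ht
    simp [abs_of_pos ht]
  have hEm' : Filter.Tendsto
      (fun t : ℝ => Complex.exp (2 * ((∫ z in (0:ℝ)..(-t), u z) - α * Real.log |t|)))
      Filter.atTop (nhds (Complex.exp (2 * Lm))) := by
    refine ((Complex.continuous_exp.tendsto _).comp (hLm.const_mul 2)).congr' ?_
    filter_upwards [Filter.eventually_gt_atTop 0] with t ht
    simp [abs_of_pos ht]
  have hEm : Filter.Tendsto
      (fun t : ℝ => Complex.exp (2 * ((∫ z in (0:ℝ)..t, u z) - α * Real.log |t|)))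
      Filter.atBot (nhds (Complex.exp (2 * Lm))) := by
    have := hEm'.comp Filter.tendsto_neg_atBot_atTop
    simpa [Function.comp_def] using this
  have hscale : ∀ x : ℝ, cbrt3 * (x / cbrt3) = x := fun x => mul_div_cancel₀ x hc.ne'
  refine ⟨A * Complex.exp (2 * Lp), A * Complex.exp (2 * Lm),
    mul_ne_zero hA0 (Complex.exp_ne_zero _), mul_ne_zero hA0 (Complex.exp_ne_zero _), ?_, ?_,
    Complex.exp (2 * Lp) / Complex.exp (2 * Lm), ?_, ?_⟩
  · have t1 := (((hrp.const_mul 2).const_sub 1).const_mul A).mul hEp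
    have t2 := t1.comp (Filter.tendsto_id.atTop_div_const hc)
    simp only [mul_zero, sub_zero, mul_one] at t2
    refine t2.congr' ?_
    filter_upwards [Filter.eventually_ne_atTop 0] with x hx
    have := hgE (x / cbrt3) (div_ne_zero hx hc.ne')
    rw [hscale] at this
    exact this.symm
  · have t1 := (((hrm.const_mul 2).const_sub 1).const_mul A).mul hEm
    have t2 := t1.comp (Filter.tendsto_id.atBot_div_const hc)
    simp only [mul_zero, sub_zero, mul_one] at t2
    refine t2.congr' ?_
    filter_upwards [Filter.eventually_ne_atBot 0] with x hx
    have := hgE (x / cbrt3) (div_ne_zero hx hc.ne')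
    rw [hscale] at this
    exact this.symm
  · refine (hEp.div hEm' (Complex.exp_ne_zero _)).congr fun x => ?_
    have hi := fun a b : ℝ => hu.continuous.intervalIntegrable (μ := MeasureTheory.volume) a b
    rw [Pi.div_apply, ← Complex.exp_sub, ← intervalIntegral.integral_interval_sub_left
      (hi 0 x) (hi 0 (-x))]
    congr 1
    -- The logarithms at the two ends cancel.
    ring
  · rw [mul_div_mul_left _ _ hA0]
end

section
/- Let μ ∈ ℝ and θ₊, θ₋ ∈ [0,2π), set α := −iμ/2, and let u : ℝ → ℂ be a smooth solution of the PII equation u''(x) = x·u(x) + 2·u(x)³ − α on ℝ, taking purely imaginary values on ℝ and satisfying both asymptotic expansions: (A+) there exist x₀, K > 0 such that |u(x) − α/x − 2α(1−α²)·x^{−4} − 4α(1−α²)(10−3α²)·x^{−7}| ≤ K·x^{−10} for all x ≥ x₀, and (A−) there exist d ∈ iℝ, φ ∈ ℝ and x₁, K' > 0 such that |u(x) − α/x − d·(−x)^{−1/4}·sin( (2/3)(−x)^{3/2} − (3/4)·d²·ln(−x) + φ )| ≤ K'·(−x)^{−7/4} for all x ≤ −x₁. Assume moreover that lim_{x→+∞}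 exp( 2·∫_{−x}^{x} u(y) dy ) = e^{i(θ₊−θ₋)}. Define w(x) := ∫₀ˣ exp( (2/3^{1/3}) ∫₀^y u(z/3^{1/3}) dz ) dy − C with C := (2·3^{1/3}/(1−iμ))·(u'(0) − u(0)²). Then there exist β ∈ [0,2π) and a constant M > 0 such that the function z(t,x) := e^{iβ}·t^{1/3}·e^{−(iμ/3)·ln t}·w(x·t^{−1/3}) satisfies the geometric flow ∂_t z = −∂_x³ z + (3/2)·conj(∂_x z)·(∂_x² z)² and |∂_x z| = 1 on (0,∞)×ℝ, and satisfies |z(t,x) − z₀(x)| ≤ M·t^{1/3} for all t > 0 and all x ∈ ℝ \ {0}, where z₀(x) := x·(1+μ²)^{−1/2}·e^{i(θ₊ − μ·ln x)} for x > 0 and z₀(x) := x·(1+μ²)^{−1/2}·e^{i(θ₋ − μ·ln|x|)} for x < 0. -/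
open Filter Topology

/-! ### Convergence to logarithmic spirals -/

/-- A curve whose velocity is `O(x⁻²)` on `[1, ∞)` converges, with rate `O(x⁻¹)`. -/
lemma exists_limit_of_deriv_bound (f f' : ℝ → ℂ) (B : ℝ)
    (hf : ∀ x, 1 ≤ x → HasDerivAt f (f' x) x) (hB : ∀ x, 1 ≤ x → ‖f' x‖ ≤ B / x ^ 2) :
    ∃ γ : ℂ, ∀ x, 1 ≤ x → ‖f x - γ‖ ≤ B / x := by
  have hB0 : 0 ≤ B := by simpa using (norm_nonneg _).trans (hB 1 le_rfl)
  have key : ∀ x y, 1 ≤ x → x ≤ y → ‖f y - f x‖ ≤ B / x - B / y := by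
    intro x y hx hxy
    have hd : ∀ z : ℝ, 1 ≤ z → HasDerivAt (fun z : ℝ => B / x - B / z) (B / z ^ 2) z := by
      intro z hz
      have hz0 : z ≠ 0 := by positivity
      have := ((hasDerivAt_inv hz0).const_mul B).const_sub (B / x)
      simpa [div_eq_mul_inv] using this
    have := image_norm_le_of_norm_deriv_right_le_deriv_boundary'
      (f := fun z => f z - f x) (f' := f') (a := x) (b := y)
      (B := fun z => B / x - B / z) (B' := fun z => B / z ^ 2)
      (fun z hz => ((hf z (hx.trans hz.1)).continuousAt.sub continuousAt_const).continuousWithinAt)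
      (fun z hz => ((hf z (hx.trans hz.1)).sub_const _).hasDerivWithinAt)
      (by simp)
      (fun z hz => (hd z (hx.trans hz.1)).continuousAt.continuousWithinAt)
      (fun z hz => (hd z (hx.trans hz.1)).hasDerivWithinAt)
      (fun z hz => hB z (hx.trans hz.1))
    exact this ⟨hxy, le_rfl⟩
  have key' : ∀ x y, 1 ≤ x → x ≤ y → ‖f y - f x‖ ≤ B / x := by
    intro x y hx hxy
    have h0 : 0 ≤ B / y := div_nonneg hB0 (by linarith)
    linarith [key x y hx hxy]
  have hc : CauchySeq f := by
    rw [Metric.cauchySeq_iff']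
    intro ε hε
    have hN : 1 ≤ B / ε + 1 := by linarith [div_nonneg hB0 hε.le]
    refine ⟨B / ε + 1, fun y hy => ?_⟩
    rw [dist_eq_norm]
    refine (key' _ y hN hy).trans_lt ?_
    rw [div_lt_iff₀ (by linarith), mul_add, mul_div_cancel₀ _ hε.ne']
    linarith
  obtain ⟨γ, hγ⟩ := cauchySeq_tendsto_of_complete hc
  refine ⟨γ, fun x hx => ?_⟩
  have h1 : Tendsto (fun y => ‖f x - f y‖) atTop (𝓝 ‖f x - γ‖) := (hγ.const_sub _).norm
  refine le_of_tendsto h1 ?_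
  filter_upwards [eventually_ge_atTop x] with y hy
  rw [norm_sub_rev]
  exact key' x y hx hy

lemma norm_exp_mul_ofReal (a : ℂ) (ha : a.re = 0) (r : ℝ) : ‖Complex.exp (a * r)‖ = 1 := by
  simp [Complex.norm_exp, ha]

/-- If `A' = F`, `F' = 2vF`, `|F| = 1` and `(1 + a) A = x F + 2ε (v² - v') F` with `a` purely
imaginary and `v` bounded, then `A` stays at bounded distance from a logarithmic spiral
`γ x^(1+a)` on `(0, ∞)`, and `F` is asymptotic to the velocity of that spiral.

The quantity `A x^(-1-a) - 2ε v F x^(-2-a)` has a derivative that is free of `v'` and of size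
`O(x⁻²)`, which is the reason why no decay of `v` or `v'` is needed for the first claim. -/
lemma spiral_asymptotics (a ε : ℂ) (ha : a.re = 0) (A F v v' : ℝ → ℂ) (B K : ℝ)
    (hA : ∀ x, HasDerivAt A (F x) x) (hF : ∀ x, HasDerivAt F (2 * v x * F x) x)
    (hv : ∀ x, HasDerivAt v (v' x) x) (hF1 : ∀ x, ‖F x‖ = 1) (hB : ∀ x, ‖v x‖ ≤ B)
    (hK : ∀ x, 1 ≤ x → ‖v' x‖ ≤ K * √x)
    (hid : ∀ x : ℝ, (1 + a) * A x = x * F x + 2 * ε * (v x ^ 2 - v' x) * F x) :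
    ∃ γ : ℂ, ∃ M : ℝ, (∀ x : ℝ, 0 < x → ‖A x - γ * x * Complex.exp (a * Real.log x)‖ ≤ M) ∧
      Tendsto (fun x : ℝ => F x * Complex.exp (-a * Real.log x)) atTop (𝓝 ((1 + a) * γ)) := by
  have hB0 : 0 ≤ B := (norm_nonneg _).trans (hB 0)
  have hma : (-a).re = 0 := by simp [ha]
  set e : ℝ → ℂ := fun x => Complex.exp (-a * Real.log x) with he
  have he1 : ∀ x, ‖e x‖ = 1 := fun x => norm_exp_mul_ofReal _ hma _
  have hed : ∀ x : ℝ, 1 ≤ x → HasDerivAt e (-a * e x / x) x := by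
    intro x hx
    have hx0 : x ≠ 0 := by positivity
    have := (((Real.hasDerivAt_log hx0).ofReal_comp).const_mul (-a)).cexp
    refine this.congr_deriv ?_
    simp only [he]; push_cast; ring
  have hee : ∀ x : ℝ, e x * Complex.exp (a * Real.log x) = 1 := by
    intro x
    simp only [he]
    rw [← Complex.exp_add]; simp
  set f : ℝ → ℂ := fun x => A x * e x / x - 2 * ε * (v x * F x * e x / x ^ 2) with hf
  set f' : ℝ → ℂ := fun x => -6 * ε * v x ^ 2 * F x * e x / x ^ 2
    + 2 * ε * (a + 2) * v x * F x * e x / x ^ 3 with hf'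
  obtain ⟨γ, hγ⟩ := exists_limit_of_deriv_bound f f'
    (6 * ‖ε‖ * B ^ 2 + 2 * ‖ε‖ * ‖a + 2‖ * B) (by
      intro x hx
      have hx0 : (x : ℂ) ≠ 0 := by
        have : x ≠ 0 := by positivity
        exact_mod_cast this
      have hxd : HasDerivAt (fun y : ℝ => (y : ℂ)) 1 x := by
        simpa using (hasDerivAt_id x).ofReal_comp
      have h1 := ((hA x).mul (hed x hx)).div hxd hx0
      have h2 := ((((hv x).mul (hF x)).mul (hed x hx)).div (hxd.pow 2)
        (pow_ne_zero 2 hx0)).const_mul (2 * ε)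
      refine (h1.sub h2).congr_deriv ?_
      have h3 := hid x
      simp only [hf', Pi.mul_apply, Pi.pow_apply]
      field_simp
      push_cast
      linear_combination (-e x * x ^ 2) * h3) (by
      intro x hx
      have hx0 : 0 < x := by positivity
      simp only [hf']
      refine (norm_add_le _ _).trans ?_
      simp only [norm_mul, norm_div, norm_pow, he1, hF1, norm_neg, Complex.norm_real,
        Real.norm_of_nonneg hx0.le, mul_one, Complex.norm_ofNat]
      have h1 : x ^ 2 ≤ x ^ 3 := by nlinarith [sq_nonneg x]
      rw [add_div]
      gcongr
      · exact hB x
      · exact hB x)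
  set N := 6 * ‖ε‖ * B ^ 2 + 2 * ‖ε‖ * ‖a + 2‖ * B with hN
  have hN0 : 0 ≤ N := by positivity
  have hbig : ∀ x : ℝ, 1 ≤ x → ‖A x - γ * x * Complex.exp (a * Real.log x)‖
      ≤ N + 2 * ‖ε‖ * B := by
    intro x hx
    have hx0 : 0 < x := by positivity
    have hxc : (x : ℂ) ≠ 0 := by exact_mod_cast hx0.ne'
    have h1 : A x - γ * x * Complex.exp (a * Real.log x)
        = (x * (f x - γ)) * Complex.exp (a * Real.log x) + 2 * ε * v x * F x / x := by
      simp only [hf]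
      field_simp
      linear_combination (-A x * x + 2 * ε * v x * F x) * hee x
    rw [h1]
    refine (norm_add_le _ _).trans ?_
    simp only [norm_mul, norm_div, norm_exp_mul_ofReal a ha, hF1, Complex.norm_real,
      Real.norm_of_nonneg hx0.le, mul_one, Complex.norm_ofNat]
    have h2 := hγ x hx
    rw [le_div_iff₀ hx0] at h2
    have h3 : 2 * ‖ε‖ * ‖v x‖ / x ≤ 2 * ‖ε‖ * B := by
      refine (div_le_self (by positivity) hx).trans ?_
      gcongr
      exact hB x
    linarith
  refine ⟨γ, ?_⟩
  obtain ⟨M₀, hM₀⟩ := (isCompact_Icc (a := (0:ℝ)) (b := 1)).exists_bound_of_continuousOn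
    (f := A) (fun x _ => (hA x).continuousAt.continuousWithinAt)
  refine ⟨max (N + 2 * ‖ε‖ * B) (M₀ + ‖γ‖), ?_, ?_⟩
  · intro x hx
    rcases le_total 1 x with h | h
    · exact (hbig x h).trans (le_max_left _ _)
    · refine le_trans ((norm_sub_le _ _).trans ?_) (le_max_right _ _)
      simp only [norm_mul, norm_exp_mul_ofReal a ha, Complex.norm_real,
        Real.norm_of_nonneg hx.le, mul_one]
      refine add_le_add (hM₀ x ⟨hx.le, h⟩) ?_
      exact mul_le_of_le_one_right (norm_nonneg _) h
  · set L := ‖1 + a‖ * (N + 2 * ‖ε‖ * B) + 2 * ‖ε‖ * (B ^ 2 + K) with hL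
    have hlim : Tendsto (fun x : ℝ => L * (√x)⁻¹) atTop (𝓝 0) := by
      simpa using (tendsto_inv_atTop_zero.comp Real.tendsto_sqrt_atTop).const_mul L
    rw [tendsto_iff_norm_sub_tendsto_zero]
    refine squeeze_zero' (Eventually.of_forall fun _ => norm_nonneg _) ?_ hlim
    filter_upwards [eventually_ge_atTop (1:ℝ)] with x hx
    have hx0 : 0 < x := by positivity
    have hxc : (x : ℂ) ≠ 0 := by exact_mod_cast hx0.ne'
    have h1 : F x * e x - (1 + a) * γ
        = ((1 + a) * (A x - γ * x * Complex.exp (a * Real.log x)) * e x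
          - 2 * ε * (v x ^ 2 - v' x) * F x * e x) / x := by
      rw [eq_div_iff hxc]
      linear_combination (-e x) * hid x + (1 + a) * γ * x * hee x
    change ‖F x * e x - (1 + a) * γ‖ ≤ _
    have hs : 1 ≤ √x := Real.one_le_sqrt.2 hx
    have hsx : √x * √x = x := Real.mul_self_sqrt hx0.le
    have h2 : ‖(1 + a) * (A x - γ * x * Complex.exp (a * Real.log x)) * e x
          - 2 * ε * (v x ^ 2 - v' x) * F x * e x‖ ≤ L * √x := by
      refine (norm_sub_le _ _).trans ?_
      simp only [norm_mul, he1, hF1, mul_one, Complex.norm_ofNat]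
      have h3 : ‖v x ^ 2 - v' x‖ ≤ (B ^ 2 + K) * √x := by
        refine (norm_sub_le _ _).trans ?_
        rw [norm_pow, add_mul]
        refine add_le_add ?_ (hK x hx)
        calc ‖v x‖ ^ 2 ≤ B ^ 2 * 1 := by
              rw [mul_one]; gcongr; exact hB x
          _ ≤ B ^ 2 * √x := by gcongr
      have h4 : ‖A x - γ * x * Complex.exp (a * Real.log x)‖ ≤ (N + 2 * ‖ε‖ * B) * √x :=
        (hbig x hx).trans (le_mul_of_one_le_right (by positivity) hs)
      calc _ ≤ ‖1 + a‖ * ((N + 2 * ‖ε‖ * B) * √x) + 2 * ‖ε‖ * ((B ^ 2 + K) * √x) := by gcongr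
        _ = L * √x := by rw [hL]; ring
    rw [h1, norm_div, Complex.norm_real, Real.norm_of_nonneg hx0.le, div_le_iff₀ hx0]
    refine h2.trans_eq ?_
    rw [mul_assoc]
    congr 1
    rw [eq_inv_mul_iff_mul_eq₀ (by positivity), hsx]

/-! ### Growth of the Painlevé function -/

/-- Every correction term of the two expansions is bounded for `|x| ≥ 1`, and `u` is continuous, so
`u` is bounded on the whole line. -/
lemma exists_bound_of_expansions (α : ℂ) (u : ℝ → ℂ) (hu : Continuous u)
    (hAp : ∃ x₀ : ℝ, 0 < x₀ ∧ ∃ K : ℝ, 0 < K ∧ ∀ x : ℝ, x₀ ≤ x →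
      ‖u x - α / x - 2 * α * (1 - α ^ 2) * (x : ℂ) ^ (-4 : ℤ)
        - 4 * α * (1 - α ^ 2) * (10 - 3 * α ^ 2) * (x : ℂ) ^ (-7 : ℤ)‖
        ≤ K * x ^ (-10 : ℤ))
    (hAm : ∃ d : ℂ, d.re = 0 ∧ ∃ φ : ℝ, ∃ x₁ : ℝ, 0 < x₁ ∧ ∃ K' : ℝ, 0 < K' ∧
      ∀ x : ℝ, x ≤ -x₁ →
        ‖u x - α / x - d * (((-x) ^ (-(1:ℝ)/4) : ℝ) : ℂ) *
          Complex.sin (((2/3 * (-x) ^ ((3:ℝ)/2) : ℝ) : ℂ)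
            - 3/4 * d ^ 2 * (Real.log (-x) : ℂ) + (φ : ℂ))‖
          ≤ K' * (-x) ^ (-(7:ℝ)/4)) :
    ∃ B : ℝ, ∀ x, ‖u x‖ ≤ B := by
  obtain ⟨x₀, hx₀, K, hK, hp⟩ := hAp
  obtain ⟨d, hd, φ, x₁, hx₁, K', hK', hm⟩ := hAm
  obtain ⟨B₀, hB₀⟩ := (isCompact_Icc (a := -(max x₁ 1)) (b := max x₀ 1)).exists_bound_of_continuousOn
    (f := u) hu.continuousOn
  set c₁ : ℂ := 2 * α * (1 - α ^ 2) with hc₁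
  set c₂ : ℂ := 4 * α * (1 - α ^ 2) * (10 - 3 * α ^ 2) with hc₂
  refine ⟨max B₀ (max (K + ‖c₂‖ + ‖c₁‖ + ‖α‖) (K' + ‖d‖ + ‖α‖)), fun x => ?_⟩
  by_cases hxp : max x₀ 1 ≤ x
  · refine le_max_of_le_right (le_max_of_le_left ?_)
    have hx1 : 1 ≤ x := (le_max_right _ _).trans hxp
    have hx0 : 0 < x := by positivity
    have hz : ∀ n : ℕ, x ^ (-(n : ℤ)) ≤ 1 := by
      intro n
      rw [zpow_neg, zpow_natCast]
      exact inv_le_one_of_one_le₀ (one_le_pow₀ hx1)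
    have h := hp x ((le_max_left _ _).trans hxp)
    have h' : ‖u x - α / x - c₁ * (x : ℂ) ^ (-4 : ℤ) - c₂ * (x : ℂ) ^ (-7 : ℤ)‖ ≤ K :=
      h.trans (mul_le_of_le_one_right hK.le (hz 10))
    have e : u x = (u x - α / x - c₁ * (x : ℂ) ^ (-4 : ℤ) - c₂ * (x : ℂ) ^ (-7 : ℤ))
      + c₂ * (x : ℂ) ^ (-7 : ℤ) + c₁ * (x : ℂ) ^ (-4 : ℤ) + α / x := by ring
    rw [e]
    refine norm_add_le_of_le (norm_add_le_of_le (norm_add_le_of_le h' ?_) ?_) ?_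
    · rw [norm_mul, norm_zpow, Complex.norm_real, Real.norm_of_nonneg hx0.le]
      exact mul_le_of_le_one_right (norm_nonneg _) (hz 7)
    · rw [norm_mul, norm_zpow, Complex.norm_real, Real.norm_of_nonneg hx0.le]
      exact mul_le_of_le_one_right (norm_nonneg _) (hz 4)
    · rw [norm_div, Complex.norm_real, Real.norm_of_nonneg hx0.le]
      exact div_le_self (norm_nonneg _) hx1
  by_cases hxm : x ≤ -(max x₁ 1)
  · refine le_max_of_le_right (le_max_of_le_right ?_)
    have hx1 : 1 ≤ -x := by linarith [le_max_right x₁ 1]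
    have hx0 : x < 0 := by linarith
    have h := hm x (by linarith [le_max_left x₁ 1])
    -- `d` is purely imaginary, so the argument of the sine is real.
    have hd2 : d ^ 2 = ((-d.im ^ 2 : ℝ) : ℂ) := by
      apply Complex.ext <;> simp [sq, hd]
    have hsin : ‖Complex.sin (((2/3 * (-x) ^ ((3:ℝ)/2) : ℝ) : ℂ)
            - 3/4 * d ^ 2 * (Real.log (-x) : ℂ) + (φ : ℂ))‖ ≤ 1 := by
      have : (((2/3 * (-x) ^ ((3:ℝ)/2) : ℝ) : ℂ) - 3/4 * d ^ 2 * (Real.log (-x) : ℂ) + (φ : ℂ))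
        = ((2/3 * (-x) ^ ((3:ℝ)/2) - 3/4 * (-d.im ^ 2) * Real.log (-x) + φ : ℝ) : ℂ) := by
        rw [hd2]; push_cast; ring
      rw [this, ← Complex.ofReal_sin, Complex.norm_real]
      exact Real.abs_sin_le_one _
    set S := Complex.sin (((2/3 * (-x) ^ ((3:ℝ)/2) : ℝ) : ℂ)
            - 3/4 * d ^ 2 * (Real.log (-x) : ℂ) + (φ : ℂ)) with hS
    set r : ℝ := (-x) ^ (-(1:ℝ)/4) with hr
    have hr0 : 0 ≤ r := Real.rpow_nonneg (by linarith) _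
    have hr1 : r ≤ 1 := Real.rpow_le_one_of_one_le_of_nonpos hx1 (by norm_num)
    have h' : ‖u x - α / x - d * (r : ℂ) * S‖ ≤ K' :=
      h.trans (mul_le_of_le_one_right hK'.le
        (Real.rpow_le_one_of_one_le_of_nonpos hx1 (by norm_num)))
    have e : u x = (u x - α / x - d * (r : ℂ) * S) + d * (r : ℂ) * S + α / x := by ring
    rw [e]
    refine norm_add_le_of_le (norm_add_le_of_le h' ?_) ?_
    · rw [norm_mul, norm_mul, Complex.norm_real, Real.norm_of_nonneg hr0, mul_assoc]
      exact mul_le_of_le_one_right (norm_nonneg _) (mul_le_one₀ hr1 (norm_nonneg _) hsin)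
    · rw [norm_div, Complex.norm_real, Real.norm_of_nonpos hx0.le]
      exact div_le_self (norm_nonneg _) hx1
  · exact le_max_of_le_left (hB₀ x ⟨by linarith, by linarith⟩)

/-- A bounded solution of the rescaled Painlevé equation has derivative `O(|x|^(1/2))`: the
function `v'² - x v²/3 - v⁴ + (2α/3) v` has derivative `-v²/3`, hence grows at most linearly. -/
lemma exists_deriv_bound_s19 (α : ℂ) (v v' : ℝ → ℂ) (B : ℝ)
    (hv : ∀ x, HasDerivAt v (v' x) x)
    (hv' : ∀ x : ℝ, HasDerivAt v' ((x * v x - α) / 3 + 2 * v x ^ 3) x)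
    (hB : ∀ x, ‖v x‖ ≤ B) :
    ∃ K : ℝ, ∀ x : ℝ, 1 ≤ |x| → ‖v' x‖ ≤ K * √|x| := by
  have hB0 : 0 ≤ B := (norm_nonneg _).trans (hB 0)
  set H : ℝ → ℂ := fun x => v' x ^ 2 - x * v x ^ 2 / 3 - v x ^ 4 + 2 * α / 3 * v x with hH
  have hHd : ∀ x, HasDerivAt H (-(v x ^ 2) / 3) x := by
    intro x
    have hxd : HasDerivAt (fun y : ℝ => (y : ℂ)) 1 x := by
      simpa using (hasDerivAt_id x).ofReal_comp
    have := ((((hv' x).pow 2).sub ((hxd.mul ((hv x).pow 2)).div_const 3)).sub ((hv x).pow 4)).add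
      ((hv x).const_mul (2 * α / 3))
    refine this.congr_deriv ?_
    simp only [Pi.pow_apply]
    push_cast
    ring
  have hHb : ∀ x, ‖H x - H 0‖ ≤ B ^ 2 / 3 * |x| := by
    intro x
    have := Convex.norm_image_sub_le_of_norm_hasDerivWithin_le (f := H) (s := Set.univ)
      (x := 0) (y := x) (C := B ^ 2 / 3)
      (fun y _ => (hHd y).hasDerivWithinAt) (fun y _ => by
        rw [norm_div, norm_neg, norm_pow, Complex.norm_ofNat]
        gcongr
        exact hB y) convex_univ trivial trivial
    simpa using this
  set L := ‖H 0‖ + B ^ 2 / 3 + B ^ 2 / 3 + B ^ 4 + ‖2 * α / 3‖ * B with hL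
  have hL0 : 0 ≤ L := by positivity
  refine ⟨√L, fun x hx => ?_⟩
  rw [← Real.sqrt_mul hL0]
  refine Real.le_sqrt_of_sq_le ?_
  have e : v' x ^ 2 = H 0 + (H x - H 0) + x * v x ^ 2 / 3 + v x ^ 4 - 2 * α / 3 * v x := by
    simp only [hH]; ring
  rw [← norm_pow, e, hL]
  simp only [add_mul]
  refine norm_sub_le_of_le (norm_add_le_of_le (norm_add_le_of_le (norm_add_le_of_le ?_ (hHb x))
    ?_) ?_) ?_
  · exact le_mul_of_one_le_right (norm_nonneg _) hx
  · rw [norm_div, norm_mul, norm_pow, Complex.norm_ofNat, Complex.norm_real, Real.norm_eq_abs]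
    have : ‖v x‖ ^ 2 ≤ B ^ 2 := by gcongr; exact hB x
    nlinarith [abs_nonneg x]
  · rw [norm_pow]
    refine le_trans ?_ (le_mul_of_one_le_right (by positivity) hx)
    gcongr; exact hB x
  · rw [norm_mul]
    refine le_trans ?_ (le_mul_of_one_le_right (by positivity) hx)
    gcongr; exact hB x

/-! ### Self-similar solutions of the flow -/

/-- The integrated form of the rescaled Painlevé equation: the profile `w` satisfies the
stationary equation of the flow in self-similar variables. -/
lemma profile_identity (a C : ℂ) (w F v v' : ℝ → ℂ)
    (hw : ∀ x, HasDerivAt w (F x) x) (hF : ∀ x, HasDerivAt F (2 * v x * F x) x)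
    (hv : ∀ x, HasDerivAt v (v' x) x)
    (hv' : ∀ x : ℝ, HasDerivAt v' ((x * v x - a / 2) / 3 + 2 * v x ^ 3) x)
    (hw0 : w 0 = -C) (hF0 : F 0 = 1) (hC : (1 + a) * C = 6 * (v' 0 - v 0 ^ 2)) (x : ℝ) :
    (1 + a) * w x = x * F x + 2 * 3 * (v x ^ 2 - v' x) * F x := by
  set G : ℝ → ℂ := fun x => (1 + a) * w x - (x * F x + 2 * 3 * (v x ^ 2 - v' x) * F x) with hG
  have hGd : ∀ x, HasDerivAt G 0 x := by
    intro x
    have hxd : HasDerivAt (fun y : ℝ => (y : ℂ)) 1 x := by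
      simpa using (hasDerivAt_id x).ofReal_comp
    have := ((hw x).const_mul (1 + a)).sub ((hxd.mul (hF x)).add
      (((((hv x).pow 2).sub (hv' x)).const_mul (2 * 3)).mul (hF x)))
    refine this.congr_deriv ?_
    simp only [Pi.pow_apply, Pi.sub_apply]
    push_cast
    ring
  have hc := is_const_of_deriv_eq_zero (f := G) (fun x => (hGd x).differentiableAt)
    (fun x => (hGd x).deriv) x 0
  have h0 : G 0 = 0 := by
    simp only [hG, hw0, hF0]
    push_cast
    linear_combination -hC
  rw [h0] at hc
  exact sub_eq_zero.1 hc

/-- Self-similar solutions of the flow: the ansatz `q t^{(1+a)/3} w(x t^{-1/3})` reduces the flow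
to the stationary equation for `w`. -/
lemma flow_of_profile (a q : ℂ) (ha : a.re = 0) (hq : ‖q‖ = 1) (w F v v' : ℝ → ℂ)
    (hw : ∀ x, HasDerivAt w (F x) x) (hF : ∀ x, HasDerivAt F (2 * v x * F x) x)
    (hv : ∀ x, HasDerivAt v (v' x) x) (hF1 : ∀ x, ‖F x‖ = 1)
    (hid : ∀ x : ℝ, (1 + a) * w x = x * F x + 2 * 3 * (v x ^ 2 - v' x) * F x)
    (z : ℝ → ℝ → ℂ)
    (hz : ∀ t x, z t x = q * ((t ^ ((1:ℝ)/3) : ℝ) : ℂ) *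
      Complex.exp (a / 3 * Real.log t) * w (x * t ^ (-(1:ℝ)/3)))
    (t : ℝ) (ht : 0 < t) (x : ℝ) :
    (deriv (fun s : ℝ => z s x) t =
          -(deriv (deriv (deriv (z t))) x) +
            (3/2) * (starRingEnd ℂ) (deriv (z t) x) * (deriv (deriv (z t)) x) ^ 2) ∧
        ‖deriv (z t) x‖ = 1 := by
  set r : ℝ := t ^ (-(1:ℝ)/3) with hr
  set ρ : ℝ := t ^ ((1:ℝ)/3) with hρ
  have hr0 : 0 < r := Real.rpow_pos_of_pos ht _
  have hrρ : ρ * r = 1 := by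
    rw [hr, hρ, ← Real.rpow_add ht]; norm_num
  have hr3 : r ^ 3 * t = 1 := by
    rw [hr, ← Real.rpow_natCast, ← Real.rpow_mul ht.le]
    norm_num
    rw [Real.rpow_neg_one, inv_mul_cancel₀ ht.ne']
  have hrρc : (ρ : ℂ) * r = 1 := by exact_mod_cast hrρ
  set τ : ℂ := Complex.exp (a / 3 * Real.log t) with hτ
  have hτ1 : ‖τ‖ = 1 := norm_exp_mul_ofReal _ (by simp [ha]) _
  set p : ℂ := q * τ with hp
  have hp1 : ‖p‖ = 1 := by rw [hp, norm_mul, hq, hτ1, one_mul]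
  have hzt : z t = fun x => p * ρ * w (x * r) := by
    funext y; rw [hz]; ring
  have hin : ∀ y : ℝ, HasDerivAt (fun y : ℝ => y * r) r y := fun y => by
    simpa using (hasDerivAt_id y).mul_const r
  have hcomp : ∀ (g g' : ℝ → ℂ), (∀ y, HasDerivAt g (g' y) y) → ∀ y : ℝ,
      HasDerivAt (fun y => g (y * r)) (r * g' (y * r)) y := by
    intro g g' hg y
    have := (hg (y * r)).scomp y (hin y)
    simpa [Function.comp_def] using this
  have h1 : deriv (z t) = fun y => p * F (y * r) := by
    funext y
    rw [hzt, ((hcomp w F hw y).const_mul (p * ρ)).deriv]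
    linear_combination p * F (y * r) * hrρc
  have h2 : deriv (deriv (z t)) = fun y => p * r * (2 * v (y * r) * F (y * r)) := by
    funext y
    rw [h1, ((hcomp F _ hF y).const_mul p).deriv]
    ring
  have h3 : deriv (deriv (deriv (z t))) x
      = p * r ^ 2 * (2 * v' (x * r) + 4 * v (x * r) ^ 2) * F (x * r) := by
    have hd := ((((hcomp v _ hv x).const_mul 2).mul (hcomp F _ hF x)).const_mul (p * r))
    rw [h2]
    refine hd.deriv.trans ?_
    ring
  have hnorm : ‖p * F (x * r)‖ = 1 := by rw [norm_mul, hp1, hF1, one_mul]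
  have hconj : (starRingEnd ℂ) (p * F (x * r)) * (p * F (x * r)) = 1 := by
    rw [mul_comm, Complex.mul_conj, Complex.normSq_eq_norm_sq, hnorm]; simp
  have h4 : deriv (fun s : ℝ => z s x) t
      = p * ((1 + a) / 3 * r ^ 2 * w (x * r) - x * r ^ 3 / 3 * F (x * r)) := by
    have e1 : HasDerivAt (fun s : ℝ => ((s ^ ((1:ℝ)/3) : ℝ) : ℂ)) ((r ^ 2 / 3 : ℝ) : ℂ) t := by
      refine HasDerivAt.ofReal_comp ?_
      refine (Real.hasDerivAt_rpow_const (Or.inl ht.ne')).congr_deriv ?_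
      rw [hr, ← Real.rpow_natCast, ← Real.rpow_mul ht.le]
      norm_num
      ring
    have e2 : HasDerivAt (fun s : ℝ => Complex.exp (a / 3 * Real.log s))
        (τ * (a / 3 * (t⁻¹ : ℝ))) t :=
      (((Real.hasDerivAt_log ht.ne').ofReal_comp).const_mul (a / 3)).cexp
    have e3 : HasDerivAt (fun s : ℝ => x * s ^ (-(1:ℝ)/3)) (x * (-(r ^ 4) / 3)) t := by
      refine HasDerivAt.const_mul x ?_
      refine (Real.hasDerivAt_rpow_const (Or.inl ht.ne')).congr_deriv ?_
      rw [hr, ← Real.rpow_natCast, ← Real.rpow_mul ht.le]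
      norm_num
      ring
    have e4 := (hw (x * r)).scomp t e3
    have e5 := ((e1.const_mul q).mul e2).mul e4
    have : (fun s : ℝ => z s x) = _ := funext fun s => hz s x
    rw [this]
    refine (HasDerivAt.deriv e5).trans ?_
    have ht' : (t⁻¹ : ℝ) = r ^ 3 := by
      exact inv_eq_of_mul_eq_one_left hr3
    rw [ht']
    simp only [Function.comp, Pi.mul_apply, Complex.real_smul, hp, ← hr, ← hρ, ← hτ]
    push_cast
    linear_combination (q * τ * (a / 3 * r ^ 2 * w (x * r) - x * r ^ 3 / 3 * F (x * r))) * hrρc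
  refine ⟨?_, by rw [h1]; exact hnorm⟩
  rw [h4, h3, h2, h1]
  simp only
  have h5 := hid (x * r)
  push_cast at h5
  linear_combination (p * r ^ 2 / 3) * h5
    - 6 * r ^ 2 * v (x * r) ^ 2 * p * F (x * r) * hconj

/-! ### Evolution of the double logarithmic spiral -/

/-- Main theorem: there exist `β ∈ [0,2π)` and `M > 0` such that the function
`z(t,x) = e^{iβ} t^{1/3} e^{-(iμ/3) ln t} w(x t^{-1/3})` solves the geometric flow on
`(0,∞)×ℝ` and satisfies `|z(t,x) - z₀(x)| ≤ M t^{1/3}` for `t > 0` and `x ≠ 0`, where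
`z₀` is the double logarithmic spiral with parameters `θ₊, θ₋, μ`. -/
theorem stmt_19 (μ θp θm : ℝ)
    (hθp : θp ∈ Set.Ico (0:ℝ) (2 * Real.pi)) (hθm : θm ∈ Set.Ico (0:ℝ) (2 * Real.pi))
    (α : ℂ) (hα : α = -Complex.I * μ / 2)
    (u : ℝ → ℂ) (hu : ContDiff ℝ (⊤ : ℕ∞) u)
    (hP : ∀ x : ℝ, deriv (deriv u) x = (x : ℂ) * u x + 2 * (u x) ^ 3 - α)
    (him : ∀ x : ℝ, (u x).re = 0)
    (hAp : ∃ x₀ : ℝ, 0 < x₀ ∧ ∃ K : ℝ, 0 < K ∧ ∀ x : ℝ, x₀ ≤ x →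
      ‖u x - α / x - 2 * α * (1 - α ^ 2) * (x : ℂ) ^ (-4 : ℤ)
        - 4 * α * (1 - α ^ 2) * (10 - 3 * α ^ 2) * (x : ℂ) ^ (-7 : ℤ)‖
        ≤ K * x ^ (-10 : ℤ))
    (hAm : ∃ d : ℂ, d.re = 0 ∧ ∃ φ : ℝ, ∃ x₁ : ℝ, 0 < x₁ ∧ ∃ K' : ℝ, 0 < K' ∧
      ∀ x : ℝ, x ≤ -x₁ →
        ‖u x - α / x - d * (((-x) ^ (-(1:ℝ)/4) : ℝ) : ℂ) *
          Complex.sin (((2/3 * (-x) ^ ((3:ℝ)/2) : ℝ) : ℂ)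
            - 3/4 * d ^ 2 * (Real.log (-x) : ℂ) + (φ : ℂ))‖
          ≤ K' * (-x) ^ (-(7:ℝ)/4))
    (hlim : Filter.Tendsto (fun x : ℝ => Complex.exp (2 * ∫ y in (-x)..x, u y))
      Filter.atTop (nhds (Complex.exp (Complex.I * (θp - θm)))))
    (Cc : ℂ)
    (hC : Cc = (2 * cbrt3 / (1 - Complex.I * μ)) * (deriv u 0 - (u 0) ^ 2))
    (w : ℝ → ℂ)
    (hw : ∀ x : ℝ, w x =
      (∫ y in (0:ℝ)..x, Complex.exp (((2 / cbrt3 : ℝ) : ℂ) *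
        ∫ z in (0:ℝ)..y, u (z / cbrt3))) - Cc) :
    ∃ β : ℝ, β ∈ Set.Ico (0:ℝ) (2 * Real.pi) ∧ ∃ M : ℝ, 0 < M ∧
    ∃ z : ℝ → ℝ → ℂ,
      (∀ t : ℝ, 0 < t → ∀ x : ℝ, z t x =
        Complex.exp (Complex.I * β) * ((t ^ ((1:ℝ)/3) : ℝ) : ℂ) *
          Complex.exp (-(Complex.I * μ / 3) * Real.log t) *
          w (x * t ^ (-(1:ℝ)/3))) ∧
      (∀ t : ℝ, 0 < t → ∀ x : ℝ,
        (deriv (fun s : ℝ => z s x) t =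
          -(deriv (deriv (deriv (z t))) x) +
            (3/2) * (starRingEnd ℂ) (deriv (z t) x) * (deriv (deriv (z t)) x) ^ 2) ∧
        ‖deriv (z t) x‖ = 1) ∧
      (∀ t : ℝ, 0 < t → ∀ x : ℝ, x ≠ 0 →
        ‖z t x - (x : ℂ) * (((1 + μ ^ 2) ^ (-(1:ℝ)/2) : ℝ) : ℂ) *
            Complex.exp (Complex.I * ((if 0 < x then θp else θm) - μ * Real.log |x|))‖
          ≤ M * t ^ ((1:ℝ)/3)) := by
  set a : ℂ := -(Complex.I * μ) with ha
  have hare : a.re = 0 := by simp [ha]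
  have haα : α = a / 2 := by rw [hα, ha]; ring
  have hc0 : 0 < cbrt3 := by unfold cbrt3; positivity
  have hc3 : cbrt3 ^ 3 = 3 := by
    unfold cbrt3
    rw [← Real.rpow_natCast, ← Real.rpow_mul (by norm_num)]; norm_num
  set c : ℝ := cbrt3 with hc
  have hcc : (c : ℂ) ≠ 0 := by exact_mod_cast hc0.ne'
  have hc3c : (c : ℂ) ^ 3 = 3 := by exact_mod_cast hc3
  have h1a : 1 + a ≠ 0 := by
    intro h
    have := congrArg Complex.re h
    simp [ha] at this
  -- Rescaled Painlevé function, in the variable of the profile `w`.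
  set v : ℝ → ℂ := fun x => u (x / c) / c with hvdef
  set v' : ℝ → ℂ := fun x => deriv u (x / c) / c ^ 2 with hv'def
  set F : ℝ → ℂ := fun y => Complex.exp (((2 / c : ℝ) : ℂ) * ∫ z in (0:ℝ)..y, u (z / c)) with hFdef
  have hud : ∀ x, HasDerivAt u (deriv u x) x := fun x =>
    ((hu.differentiable (by simp)) x).hasDerivAt
  have hudd : ∀ x, HasDerivAt (deriv u) (deriv (deriv u) x) x := by
    have h1 : ContDiff ℝ (⊤ : ℕ∞) (deriv u) := (contDiff_infty_iff_deriv.1 hu).2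
    exact fun x => ((h1.differentiable (by simp)) x).hasDerivAt
  have hin : ∀ y : ℝ, HasDerivAt (fun y : ℝ => y / c) (1 / c) y := fun y =>
    (hasDerivAt_id y).div_const c
  have hv : ∀ x, HasDerivAt v (v' x) x := by
    intro x
    refine (((hud (x / c)).scomp x (hin x)).div_const (c : ℂ)).congr_deriv ?_
    simp only [hv'def, Complex.real_smul]
    push_cast
    field_simp
  have hv' : ∀ x : ℝ, HasDerivAt v' ((x * v x - a / 2) / 3 + 2 * v x ^ 3) x := by
    intro x
    refine (((hudd (x / c)).scomp x (hin x)).div_const ((c : ℂ) ^ 2)).congr_deriv ?_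
    rw [hP]
    simp only [hvdef, Complex.real_smul, haα]
    push_cast
    rw [← hc3c]
    field_simp
    ring
  have huc : Continuous fun z : ℝ => u (z / c) := hu.continuous.comp (continuous_id.div_const c)
  have hF : ∀ x, HasDerivAt F (2 * v x * F x) x := by
    intro x
    refine (((huc.integral_hasStrictDerivAt 0 x).hasDerivAt).const_mul
      ((2 / c : ℝ) : ℂ)).cexp.congr_deriv ?_
    simp only [hFdef, hvdef]
    push_cast
    ring
  have hF1 : ∀ x, ‖F x‖ = 1 := by
    intro x
    have h1 : (fun z : ℝ => u (z / c)) = fun z => Complex.I * ((u (z / c)).im : ℂ) := by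
      funext z
      apply Complex.ext <;> simp [him]
    simp only [hFdef]
    rw [h1, intervalIntegral.integral_const_mul, intervalIntegral.integral_ofReal,
      Complex.norm_exp]
    simp
  have hFc : Continuous F := continuous_iff_continuousAt.2 fun x => (hF x).continuousAt
  have hwd : ∀ x, HasDerivAt w (F x) x := by
    intro x
    have h1 : w = fun x => (∫ y in (0:ℝ)..x, F y) - Cc := funext hw
    rw [h1]
    exact ((hFc.integral_hasStrictDerivAt 0 x).hasDerivAt).sub_const Cc
  have hid := profile_identity a Cc w F v v' hwd hF hv hv' (by rw [hw]; simp)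
    (by simp [hFdef]) (by
      have h2 : (1 : ℂ) - Complex.I * μ = 1 + a := by rw [ha]; ring
      rw [hC, h2]
      simp only [hvdef, hv'def, zero_div]
      field_simp
      linear_combination (2 * (deriv u 0 - u 0 ^ 2)) * hc3c)
  obtain ⟨B, hB⟩ : ∃ B : ℝ, ∀ x, ‖v x‖ ≤ B := by
    obtain ⟨B, hB⟩ := exists_bound_of_expansions α u hu.continuous hAp hAm
    refine ⟨B / c, fun x => ?_⟩
    simp only [hvdef]
    rw [norm_div, Complex.norm_real, Real.norm_of_nonneg hc0.le]
    gcongr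
    exact hB _
  obtain ⟨K, hK⟩ := exists_deriv_bound_s19 (a / 2) v v' B hv hv' hB
  obtain ⟨γp, Mp, hMp, hTp⟩ := spiral_asymptotics a 3 hare w F v v' B K hwd hF hv hF1 hB
    (fun x hx => by
      have h1 := hK x
      rw [abs_of_nonneg (zero_le_one.trans hx)] at h1
      exact h1 hx) hid
  have hneg : ∀ (g g' : ℝ → ℂ), (∀ y, HasDerivAt g (g' y) y) → ∀ y : ℝ,
      HasDerivAt (fun y => g (-y)) (-g' (-y)) y := by
    intro g g' hg y
    have := (hg (-y)).scomp y (hasDerivAt_neg y)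
    simpa [Function.comp_def] using this
  -- The end at `-∞` is the end at `+∞` of the reflected data, for which `ε` changes sign.
  obtain ⟨γm, Mm, hMm, hTm⟩ := spiral_asymptotics a (-3) hare (fun x => -w (-x)) (fun x => F (-x))
    (fun x => -v (-x)) (fun x => v' (-x)) B K
    (fun x => (hneg w F hwd x).neg.congr_deriv (neg_neg _))
    (fun x => (hneg F _ hF x).congr_deriv (by ring))
    (fun x => (hneg v v' hv x).neg.congr_deriv (neg_neg _))
    (fun x => hF1 _) (fun x => by simpa using hB (-x))
    (fun x hx => by
      have h1 := hK (-x)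
      rw [abs_neg, abs_of_nonneg (zero_le_one.trans hx)] at h1
      exact h1 hx)
    (fun x => by
      have h1 := hid (-x)
      push_cast at h1
      linear_combination -h1)
  have hγp : ‖(1 + a) * γp‖ = 1 := by
    refine tendsto_nhds_unique hTp.norm ?_
    have : (fun x : ℝ => ‖F x * Complex.exp (-a * Real.log x)‖) = fun _ => 1 := by
      funext x
      rw [norm_mul, hF1, norm_exp_mul_ofReal _ (by simp [hare]), one_mul]
    rw [this]
    exact tendsto_const_nhds
  have hrel : γp = Complex.exp (Complex.I * (θp - θm)) * γm := by
    have hcx : Tendsto (fun x : ℝ => c * x) atTop atTop := tendsto_id.const_mul_atTop hc0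
    have h1 := hTp.comp hcx
    have h2 := hlim.mul (hTm.comp hcx)
    have h3 : ∀ x : ℝ, F (c * x) = Complex.exp (2 * ∫ y in (-x)..x, u y) * F (-(c * x)) := by
      intro x
      have h4 : ∀ x : ℝ, F (c * x) = Complex.exp (2 * ∫ y in (0:ℝ)..x, u y) := by
        intro x
        simp only [hFdef]
        rw [intervalIntegral.integral_comp_div u hc0.ne', zero_div,
          mul_div_cancel_left₀ _ hc0.ne', Complex.real_smul]
        congr 1
        push_cast
        field_simp
      have hi : ∀ p q : ℝ, IntervalIntegrable u MeasureTheory.volume p q :=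
        fun p q => hu.continuous.intervalIntegrable p q
      rw [← mul_neg, h4, h4, ← Complex.exp_add, ← mul_add,
        ← intervalIntegral.integral_add_adjacent_intervals (hi 0 (-x)) (hi (-x) x), add_comm]
    have h5 := tendsto_nhds_unique h1 (h2.congr fun x => by
      simp only [Function.comp]
      rw [h3]; ring)
    refine mul_left_cancel₀ h1a ?_
    rw [h5]; ring
  set k : ℝ := (1 + μ ^ 2) ^ (-(1:ℝ)/2) with hk
  have hk1 : k * ‖1 + a‖ = 1 := by
    have h0 : 0 < 1 + μ ^ 2 := by positivity
    have h1 : ‖1 + a‖ = (1 + μ ^ 2) ^ ((1:ℝ)/2) := by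
      rw [← Real.sqrt_eq_rpow, Complex.norm_def, Complex.normSq_apply]
      congr 1
      simp [ha]
      ring
    rw [h1, hk, ← Real.rpow_add h0]
    norm_num
  have hk0 : 0 < k := Real.rpow_pos_of_pos (by positivity) _
  have hγp0 : γp ≠ 0 := by
    rintro rfl
    simp at hγp
  set q : ℂ := k * Complex.exp (Complex.I * θp) / γp with hq
  have hqp : q * γp = k * Complex.exp (Complex.I * θp) := by
    rw [hq, div_mul_cancel₀ _ hγp0]
  have hqm : q * γm = k * Complex.exp (Complex.I * θm) := by
    have h1 : Complex.exp (Complex.I * θp)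
        = Complex.exp (Complex.I * (θp - θm)) * Complex.exp (Complex.I * θm) := by
      rw [← Complex.exp_add]; congr 1; ring
    have h2 := hqp
    rw [hrel, h1] at h2
    refine mul_left_cancel₀ (Complex.exp_ne_zero (Complex.I * (θp - θm))) ?_
    linear_combination h2
  have hq1 : ‖q‖ = 1 := by
    rw [hq, norm_div, norm_mul, Complex.norm_exp_I_mul_ofReal, Complex.norm_real,
      Real.norm_of_nonneg hk0.le, mul_one, div_eq_one_iff_eq (norm_ne_zero_iff.2 hγp0)]
    rw [norm_mul] at hγp
    have : ‖1 + a‖ ≠ 0 := norm_ne_zero_iff.2 h1a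
    exact mul_right_cancel₀ this (by linarith)
  obtain ⟨β, hβ, hβq⟩ : ∃ β : ℝ, β ∈ Set.Ico (0:ℝ) (2 * Real.pi) ∧
      Complex.exp (Complex.I * β) = q := by
    refine ⟨toIcoMod Real.two_pi_pos 0 q.arg, ?_, ?_⟩
    · simpa using toIcoMod_mem_Ico Real.two_pi_pos 0 q.arg
    · rw [← self_sub_toIcoDiv_zsmul]
      have h1 := Complex.norm_mul_exp_arg_mul_I q
      rw [hq1, Complex.ofReal_one, one_mul] at h1
      conv_rhs => rw [← h1]
      rw [Complex.exp_eq_exp_iff_exists_int]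
      refine ⟨-toIcoDiv Real.two_pi_pos 0 q.arg, ?_⟩
      push_cast [zsmul_eq_mul]
      ring
  refine ⟨β, hβ, max 1 (max Mp Mm), by positivity, fun t x =>
    Complex.exp (Complex.I * β) * ((t ^ ((1:ℝ)/3) : ℝ) : ℂ) *
          Complex.exp (-(Complex.I * μ / 3) * Real.log t) *
          w (x * t ^ (-(1:ℝ)/3)), fun t _ x => rfl, ?_, ?_⟩
  · intro t ht x
    refine flow_of_profile a q hare hq1 w F v v' hwd hF hv hF1 hid (fun t x =>
      Complex.exp (Complex.I * β) * ((t ^ ((1:ℝ)/3) : ℝ) : ℂ) *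
          Complex.exp (-(Complex.I * μ / 3) * Real.log t) *
          w (x * t ^ (-(1:ℝ)/3))) (fun t x => ?_) t ht x
    simp only [hβq, ha, neg_div]
  · intro t ht x hx
    have hτe : -(Complex.I * μ / 3) = a / 3 := by rw [ha]; ring
    rw [hβq, hτe]
    set r : ℝ := t ^ (-(1:ℝ)/3) with hr
    set ρ : ℝ := t ^ ((1:ℝ)/3) with hρ
    have hr0 : 0 < r := Real.rpow_pos_of_pos ht _
    have hρ0 : 0 < ρ := Real.rpow_pos_of_pos ht _
    have hrρ : ρ * r = 1 := by
      rw [hr, hρ, ← Real.rpow_add ht]; norm_num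
    have hrρc : (ρ : ℂ) * r = 1 := by exact_mod_cast hrρ
    have hlogr : Real.log r = -(1:ℝ) / 3 * Real.log t := Real.log_rpow ht _
    set τ : ℂ := Complex.exp (a / 3 * Real.log t) with hτ
    have hτ1 : ‖τ‖ = 1 := norm_exp_mul_ofReal _ (by simp [hare]) _
    have hpow : ∀ y : ℝ, 0 < y →
        Complex.exp (a * Real.log y) = τ * Complex.exp (a * Real.log (y * r)) := by
      intro y hy
      rw [hτ, ← Complex.exp_add, Real.log_mul hy.ne' hr0.ne', hlogr]
      congr 1
      push_cast
      ring
    have hsplit : ∀ θ y : ℝ, Complex.exp (Complex.I * (θ - μ * Real.log y))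
        = Complex.exp (Complex.I * θ) * Complex.exp (a * Real.log y) := by
      intro θ y
      rw [← Complex.exp_add, ha]; congr 1; ring
    -- Both ends reduce to the same estimate, by homogeneity of the spiral.
    have hfin : ∀ s : ℂ, ‖s‖ ≤ max 1 (max Mp Mm) → ‖q * ρ * τ * s‖ ≤ max 1 (max Mp Mm) * ρ := by
      intro s hs
      rw [norm_mul, norm_mul, norm_mul, hq1, hτ1, Complex.norm_real, Real.norm_of_nonneg hρ0.le,
        one_mul, mul_one, mul_comm]
      gcongr
    rcases lt_or_gt_of_ne hx with hneg' | hpos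
    · rw [if_neg (not_lt.2 hneg'.le), abs_of_neg hneg', hsplit, hpow (-x) (by linarith)]
      have h1 := hMm (-x * r) (mul_pos (by linarith) hr0)
      have h2 := hfin _ ((norm_neg _).le.trans (h1.trans
        ((le_max_right _ _).trans (le_max_right _ _))))
      refine le_of_eq_of_le (congrArg _ ?_) h2
      have h3 : -(-x * r) = x * r := by ring
      rw [h3]
      push_cast
      linear_combination (x * τ * Complex.exp (a * Real.log (-x * r))) * hqm
        + (q * τ * γm * x * Complex.exp (a * Real.log (-x * r))) * hrρc
    · rw [if_pos hpos, abs_of_pos hpos, hsplit, hpow x hpos]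
      have h1 := hMp (x * r) (mul_pos hpos hr0)
      have h2 := hfin _ (h1.trans ((le_max_left _ _).trans (le_max_right _ _)))
      refine le_of_eq_of_le (congrArg _ ?_) h2
      push_cast
      linear_combination (x * τ * Complex.exp (a * Real.log (x * r))) * hqp
        + (q * τ * γp * x * Complex.exp (a * Real.log (x * r))) * hrρc
end
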